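/- arXiv:2511.04823 — 7 statements merged into one kernel-verified Lean document; each statement's English description precedes it below -/
import Mathlib

section
/- Let v be a positive integer and let Σ = (X, B) be a Steiner triple system of order v. Then there exists a Steiner triple system Σ' = (X', B') of order 2v + 1 embedding Σ, i.e., X ⊆ X' with |X'| = 2v + 1 and B ⊆ B'. -/
/-!
A Steiner triple system on `X` is the same thing as a partial binary operation `m` on `X`, where
`m x y` is the third point of the block through the distinct points `x` and `y`: it is commutative
and satisfies `m x y ≠ x` and `m x (m x y) = y` (`IsThirdPoint`). `IsSTS.exists_thirdPoint` reads
the operation off a system, and `IsThirdPoint.isSTS` recovers a system from an operation.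

The system of order `2v + 1` lives on `X`, a copy `X̄ = {x̄ : x ∈ X}`, and one more point `∞`. Its
blocks are those of `B`, the triples `{x, x̄, ∞}`, and the triples `{x, ȳ, z̄}` for which `{x, y, z}`
is a block of `B`. Here `∞` is `inr 0`, and the copies of the points are
`inr 1, …, inr v`, through an enumeration of `X`. The corresponding operation is `doubleOp`.
-/

/-- A Steiner triple system: `B` is a family of 3-element subsets of `X` such that
every 2-element subset of `X` is contained in exactly one member of `B`. -/
def IsSTS {α : Type*} [DecidableEq α] (X : Finset α) (B : Finset (Finset α)) : Prop :=
  (∀ b ∈ B, b ⊆ X ∧ b.card = 3) ∧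
    ∀ p : Finset α, p ⊆ X → p.card = 2 → ∃! b, b ∈ B ∧ p ⊆ b

/-- `m` behaves on distinct points of `X` as the operation "third point of the block through `x`
and `y`" of a Steiner triple system. Values of `m` on the diagonal or outside `X` are arbitrary. -/
structure IsThirdPoint {α : Type*} (X : Finset α) (m : α → α → α) : Prop where
  mem : ∀ x ∈ X, ∀ y ∈ X, x ≠ y → m x y ∈ X
  comm : ∀ x ∈ X, ∀ y ∈ X, x ≠ y → m x y = m y x
  ne : ∀ x ∈ X, ∀ y ∈ X, x ≠ y → m x y ≠ x
  inv : ∀ x ∈ X, ∀ y ∈ X, x ≠ y → m x (m x y) = y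

/-- The triples `{x, y, m x y}` for distinct `x, y ∈ X`. -/
def blocksOf {α : Type*} [DecidableEq α] (X : Finset α) (m : α → α → α) : Finset (Finset α) :=
  X.offDiag.image fun p => {p.1, p.2, m p.1 p.2}

lemma mem_blocksOf {α : Type*} [DecidableEq α] {X : Finset α} {m : α → α → α} {b : Finset α} :
    b ∈ blocksOf X m ↔ ∃ x ∈ X, ∃ y ∈ X, x ≠ y ∧ b = {x, y, m x y} := by
  simp only [blocksOf, Finset.mem_image, Finset.mem_offDiag, Prod.exists]
  grind

/-- The whole multiplication table of the block `{x, y, m x y}`. -/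
lemma IsThirdPoint.facts {α : Type*} {X : Finset α} {m : α → α → α} (h : IsThirdPoint X m)
    {x y : α} (hx : x ∈ X) (hy : y ∈ X) (hxy : x ≠ y) :
    m x y ∈ X ∧ m y x = m x y ∧ m x y ≠ x ∧ m x y ≠ y ∧ m x (m x y) = y ∧ m (m x y) x = y ∧
      m y (m x y) = x ∧ m (m x y) y = x := by
  have h1 := h.mem x hx y hy hxy
  have h2 := h.comm y hy x hx hxy.symm
  have h3 := h.ne x hx y hy hxy
  have h4 : m x y ≠ y := h2 ▸ h.ne y hy x hx hxy.symm
  have h5 := h.inv x hx y hy hxy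
  have h6 : m y (m x y) = x := h2 ▸ h.inv y hy x hx hxy.symm
  exact ⟨h1, h2, h3, h4, h5, (h.comm _ h1 x hx h3).trans h5, h6, (h.comm _ h1 y hy h4).trans h6⟩

lemma IsThirdPoint.isSTS {α : Type*} [DecidableEq α] {X : Finset α} {m : α → α → α}
    (h : IsThirdPoint X m) : IsSTS X (blocksOf X m) := by
  refine ⟨fun b hb => ?_, fun p hp hcard => ?_⟩
  · obtain ⟨x, hx, y, hy, hxy, rfl⟩ := mem_blocksOf.1 hb
    obtain ⟨hmem, -, hne, hne', -⟩ := h.facts hx hy hxy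
    exact ⟨by grind, Finset.card_eq_three.2 ⟨x, y, m x y, hxy, hne.symm, hne'.symm, rfl⟩⟩
  · obtain ⟨x, y, hxy, rfl⟩ := Finset.card_eq_two.1 hcard
    have hx : x ∈ X := hp (by simp)
    have hy : y ∈ X := hp (by simp)
    refine ⟨{x, y, m x y}, ⟨mem_blocksOf.2 ⟨x, hx, y, hy, hxy, rfl⟩, by grind⟩, ?_⟩
    rintro b ⟨hb, hpb⟩
    obtain ⟨u, hu, w, hw, huw, rfl⟩ := mem_blocksOf.1 hb
    have hxb : x = u ∨ x = w ∨ x = m u w := by simpa using hpb (show x ∈ _ by simp)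
    have hyb : y = u ∨ y = w ∨ y = m u w := by simpa using hpb (show y ∈ _ by simp)
    have hfacts := h.facts hu hw huw
    clear h hpb hb
    ext z
    simp only [Finset.mem_insert, Finset.mem_singleton]
    grind

lemma IsSTS.exists_thirdPoint {α : Type*} [DecidableEq α] {X : Finset α} {B : Finset (Finset α)}
    (h : IsSTS X B) : ∃ m : α → α → α, IsThirdPoint X m ∧ B ⊆ blocksOf X m := by
  obtain ⟨hB, hpair⟩ := h
  have hex : ∀ x y, ∃ z, x ∈ X → y ∈ X → x ≠ y → ({x, y, z} ∈ B ∧ z ≠ x ∧ z ≠ y) := by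
    intro x y
    by_cases hxy : x ∈ X ∧ y ∈ X ∧ x ≠ y
    · obtain ⟨hx, hy, hne⟩ := hxy
      obtain ⟨b, ⟨hb, hsub⟩, -⟩ := hpair {x, y} (by grind) (Finset.card_pair hne)
      obtain ⟨z, hz⟩ : ∃ z, b \ {x, y} = {z} := by
        rw [← Finset.card_eq_one, Finset.card_sdiff_of_subset hsub, (hB b hb).2,
          Finset.card_pair hne]
      have hzb : z ∈ b \ {x, y} := by simp [hz]
      have hb' : b = {x, y, z} := by
        rw [← Finset.sdiff_union_of_subset hsub, hz]
        ext; simp; tauto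
      refine ⟨z, fun _ _ _ => ⟨hb' ▸ hb, ?_⟩⟩
      simp at hzb
      tauto
    · exact ⟨x, fun h1 h2 h3 => absurd ⟨h1, h2, h3⟩ hxy⟩
  choose m hm using hex
  -- A block containing `x`, `y` and `z` is the block through `x` and `y`, so `z = m x y`.
  have huniq : ∀ x y z, x ≠ y → z ≠ x → z ≠ y → ({x, y, z} : Finset α) ∈ B → m x y = z := by
    intro x y z hxy hzx hzy hb
    have hx : x ∈ X := (hB _ hb).1 (by simp)
    have hy : y ∈ X := (hB _ hb).1 (by simp)
    obtain ⟨h1, h2, h3⟩ := hm x y hx hy hxy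
    have heq := (hpair {x, y} (by grind) (Finset.card_pair hxy)).unique
      ⟨h1, by grind⟩ ⟨hb, by grind⟩
    have : m x y ∈ ({x, y, z} : Finset α) := heq ▸ (by simp)
    simp at this
    tauto
  refine ⟨m, ⟨?_, ?_, ?_, ?_⟩, ?_⟩
  · intro x hx y hy hxy
    exact (hB _ (hm x y hx hy hxy).1).1 (by simp)
  · intro x hx y hy hxy
    obtain ⟨h1, h2, h3⟩ := hm y x hy hx hxy.symm
    exact huniq _ _ _ hxy h3 h2 (by rwa [Finset.insert_comm])
  · intro x hx y hy hxy
    exact (hm x y hx hy hxy).2.1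
  · intro x hx y hy hxy
    obtain ⟨h1, h2, h3⟩ := hm x y hx hy hxy
    exact huniq _ _ _ h2.symm hxy.symm h3.symm (by rwa [Finset.pair_comm])
  · intro b hb
    obtain ⟨hbX, hb3⟩ := hB b hb
    obtain ⟨x, y, z, hxy, hxz, hyz, rfl⟩ := Finset.card_eq_three.1 hb3
    refine mem_blocksOf.2 ⟨x, hbX (by simp), y, hbX (by simp), hxy, ?_⟩
    rw [huniq x y z hxy hxz.symm hyz.symm hb]

open Classical in
/-- The third-point operation of the doubled system. The point `∞` is `inr 0`, and `inr (n + 1)` is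
the copy of the point `d n`; conversely the copy of `x` is `inr (e x + 1)`. -/
noncomputable def doubleOp {α : Type*} (m : α → α → α) (e : α → ℕ) (d : ℕ → α) :
    α ⊕ ℕ → α ⊕ ℕ → α ⊕ ℕ
  | .inl x, .inl y => .inl (m x y)
  | .inl x, .inr 0 => .inr (e x + 1)
  | .inr 0, .inl x => .inr (e x + 1)
  | .inl x, .inr (n + 1) => if x = d n then .inr 0 else .inr (e (m x (d n)) + 1)
  | .inr (n + 1), .inl x => if x = d n then .inr 0 else .inr (e (m x (d n)) + 1)
  | .inr 0, .inr 0 => .inr 0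
  | .inr 0, .inr (n + 1) => .inl (d n)
  | .inr (n + 1), .inr 0 => .inl (d n)
  | .inr (k + 1), .inr (n + 1) => .inl (m (d k) (d n))

lemma IsThirdPoint.double {α : Type*} {X : Finset α} {m : α → α → α} (h : IsThirdPoint X m)
    {v : ℕ} {e : α → ℕ} {d : ℕ → α} (he : ∀ x ∈ X, e x < v) (hd : ∀ n < v, d n ∈ X)
    (hde : ∀ x ∈ X, d (e x) = x) (hed : ∀ n < v, e (d n) = n) :
    IsThirdPoint (X.disjSum (Finset.range (v + 1))) (doubleOp m e d) := by
  have key : ∀ p ∈ X.disjSum (Finset.range (v + 1)), ∀ q ∈ X.disjSum (Finset.range (v + 1)),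
      p ≠ q → doubleOp m e d p q ∈ X.disjSum (Finset.range (v + 1)) ∧
        doubleOp m e d p q = doubleOp m e d q p ∧ doubleOp m e d p q ≠ p ∧
        doubleOp m e d p (doubleOp m e d p q) = q := by
    rintro (x | _ | k) hx (y | _ | n) hy hxy <;>
    simp only [Finset.inl_mem_disjSum, Finset.inr_mem_disjSum, Finset.mem_range,
      Nat.add_lt_add_iff_right, ne_eq, Sum.inl.injEq, Sum.inr.injEq, Nat.add_right_cancel_iff,
      not_true_eq_false] at hx hy hxy
    · have hf := h.facts hx hy hxy
      simp [doubleOp, hf]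
    · simp [doubleOp, he x hx, hde x hx]
    · by_cases hxn : x = d n
      · subst hxn
        simp [doubleOp, hed n hy]
      · have hf := h.facts hx (hd n hy) hxn
        simp [doubleOp, hxn, hf, he, hde, hed n hy, hf.2.2.1.symm]
    · simp [doubleOp, he y hy, hde y hy]
    · simp [doubleOp, hd n hy, hed n hy]
    · by_cases hyk : y = d k
      · subst hyk
        simp [doubleOp]
      · have hf := h.facts hy (hd k hx) hyk
        have hek : e (m y (d k)) ≠ k := fun hk =>
          hf.2.2.2.1 ((hde _ hf.1).symm.trans (congrArg d hk))
        simp [doubleOp, hyk, hf, he, hde, hek]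
    · simp [doubleOp, hd k hx]
    · have hkn : d k ≠ d n := fun hkn => hxy (by rw [← hed k hx, hkn, hed n hy])
      have hf := h.facts (hd k hx) (hd n hy) hkn
      simp [doubleOp, hf, hed n hy]
  exact ⟨fun p hp q hq hpq => (key p hp q hq hpq).1, fun p hp q hq hpq => (key p hp q hq hpq).2.1,
    fun p hp q hq hpq => (key p hp q hq hpq).2.2.1, fun p hp q hq hpq => (key p hp q hq hpq).2.2.2⟩

/-- Given an STS of order `v`, there exists an STS of order `2v + 1` embedding it. -/
theorem sts_doubling_plus_one {α : Type*} [DecidableEq α] (v : ℕ) (hv : 0 < v)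
    (X : Finset α) (B : Finset (Finset α)) (hSTS : IsSTS X B) (hX : X.card = v) :
    ∃ (X' : Finset (α ⊕ ℕ)) (B' : Finset (Finset (α ⊕ ℕ))),
      IsSTS X' B' ∧ X'.card = 2 * v + 1 ∧
      X.image Sum.inl ⊆ X' ∧ B.image (Finset.image Sum.inl) ⊆ B' := by
  obtain ⟨m, hm, hB⟩ := hSTS.exists_thirdPoint
  obtain ⟨a, -⟩ : X.Nonempty := Finset.card_pos.1 (hX ▸ hv)
  let E : X ≃ Fin v := X.equivFinOfCardEq hX
  have hdbl := hm.double (v := v) (e := fun x => if h : x ∈ X then (E ⟨x, h⟩ : ℕ) else 0)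
    (d := fun n => if h : n < v then (E.symm ⟨n, h⟩ : α) else a)
    (fun x hx => by simp [hx]) (fun n hn => by simp [hn])
    (fun x hx => by simp [hx]) (fun n hn => by simp [hn])
  refine ⟨_, _, hdbl.isSTS, ?_, ?_, ?_⟩
  · rw [Finset.card_disjSum, hX, Finset.card_range]
    omega
  · intro z hz
    obtain ⟨x, hx, rfl⟩ := Finset.mem_image.1 hz
    simpa using hx
  · intro b' hb'
    obtain ⟨b, hb, rfl⟩ := Finset.mem_image.1 hb'
    obtain ⟨x, hx, y, hy, hxy, rfl⟩ := mem_blocksOf.1 (hB hb)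
    refine mem_blocksOf.2 ⟨.inl x, by simpa using hx, .inl y, by simpa using hy, by simpa using hxy,
      ?_⟩
    simp [doubleOp, Finset.image_insert]
end

section
/- Let n ≥ 2 be an integer. There exists a family F of 2^n − 1 pairwise edge-disjoint perfect matchings on Z_{2^n} whose union is the set of all 2-element subsets of Z_{2^n} (i.e., a one-factorization of the complete graph K_{2^n} on Z_{2^n}), with the additional property that each matching in F consists only of pairs {x, y} of a single fixed difference a ∈ {1, ..., 2^(n-1)} (where {x, y} has difference a if y − x = ±a in Z_{2^n}). -/
/-!
For every nonzero `d`, the graph on `ℤ/2^n` joining `x` to `x + d` is two-coloured as follows: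
if `2^v` is the exact power of two dividing `d`, then adding `d` flips the `v`-th binary digit of
`x`, and this digit is well defined modulo `2^n` because `v < n`. Hence the pairs `{x, x + d}` with
`x` of `v`-th digit `0` form a perfect matching `M_d`. The elements `d` and `-d` have the same `v`,
so a pair `{x, y}` lies in exactly one of the `M_d`: the one with `d = y - x`, where `x` is the
endpoint whose `v`-th digit is `0`. Thus the `2^n - 1` matchings `M_d`, `d ≠ 0`, form the required
one-factorization.

The combinatorial part (`shiftMatching_isPerfectMatching`, `shiftMatching_inter`,
`exists_shiftMatching`) only uses two properties of the predicate "the `v`-th digit of `x` is `0`":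
it is negated by `x ↦ x + d` (`digitZero_add`) and unchanged under `d ↦ -d` (`digitZero_neg`).
-/

/-- A perfect matching (1-factor) on a finite type: a set of pairwise disjoint
2-element subsets covering every vertex. -/
def IsPerfectMatching {α : Type*} [DecidableEq α] [Fintype α]
    (M : Finset (Finset α)) : Prop :=
  (∀ e ∈ M, e.card = 2) ∧ (∀ e ∈ M, ∀ f ∈ M, e ≠ f → Disjoint e f) ∧
    ∀ x : α, ∃ e ∈ M, x ∈ e

/-- The `v`-th binary digit of `x` vanishes, where `2^v` is the exact power of two dividing `d`.
The power `2^v` is encoded as `gcd (2^n, d)`. -/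
def DigitZero (n : ℕ) (d x : ZMod (2 ^ n)) : Prop :=
  Even (x.val / Nat.gcd (2 ^ n) d.val)

theorem digitZero_neg (n : ℕ) (d x : ZMod (2 ^ n)) :
    DigitZero n (-d) x ↔ DigitZero n d x := by
  have h : Nat.gcd (2 ^ n) (-d).val = Nat.gcd (2 ^ n) d.val := by
    rw [ZMod.neg_val]
    split_ifs with h0
    · simp [h0]
    · exact Nat.gcd_self_sub_right (ZMod.val_lt d).le
  rw [DigitZero, h, DigitZero]

/-- With `g = gcd (2^n, d)`, `d / g` is odd and `2^n / g` is even, so adding `d` modulo `2^n`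
changes the parity of `x / g`. -/
theorem digitZero_add (n : ℕ) (d x : ZMod (2 ^ n)) (hd : d ≠ 0) :
    DigitZero n d (x + d) ↔ ¬ DigitZero n d x := by
  unfold DigitZero
  obtain ⟨v, hv, hg⟩ := (Nat.dvd_prime_pow Nat.prime_two).1 (Nat.gcd_dvd_left (2 ^ n) d.val)
  have hdpos : 0 < d.val := Nat.pos_of_ne_zero (by simpa using hd)
  have hgd : 2 ^ v ∣ d.val := hg ▸ Nat.gcd_dvd_right (2 ^ n) d.val
  have hvn : v < n := by
    have := (Nat.le_of_dvd hdpos hgd).trans_lt (ZMod.val_lt d)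
    exact (Nat.pow_lt_pow_iff_right (by norm_num)).1 this
  obtain ⟨w, hw⟩ : 2 ^ (v + 1) ∣ 2 ^ n := pow_dvd_pow 2 hvn
  obtain ⟨u, hu⟩ := hgd
  have hodd : ¬ Even u := by
    rintro ⟨t, rfl⟩
    have h1 : 2 ^ (v + 1) ∣ Nat.gcd (2 ^ n) d.val :=
      Nat.dvd_gcd ⟨w, hw⟩ ⟨t, by rw [hu]; ring⟩
    rw [hg] at h1
    have := (Nat.pow_dvd_pow_iff_le_right (by norm_num)).1 h1
    omega
  have hpos : 0 < 2 ^ v := by positivity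
  have key : (x + d).val / 2 ^ v + 2 * (w * ((x.val + d.val) / 2 ^ n)) = x.val / 2 ^ v + u := by
    rw [← Nat.add_mul_div_left _ _ hpos, ← Nat.add_mul_div_left _ _ hpos, ← hu, ZMod.val_add]
    congr 1
    conv_rhs => rw [← Nat.mod_add_div (x.val + d.val) (2 ^ n)]
    rw [show 2 ^ v * (2 * (w * ((x.val + d.val) / 2 ^ n)))
      = 2 ^ (v + 1) * w * ((x.val + d.val) / 2 ^ n) by ring, ← hw]
  rw [hg]
  simp only [Nat.even_iff] at *
  omega

open Classical in
/-- The set `M_d` of pairs `{x, x + d}` whose first endpoint `x` satisfies `DigitZero n d x`. -/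
noncomputable def shiftMatching (n : ℕ) (d : ZMod (2 ^ n)) : Finset (Finset (ZMod (2 ^ n))) :=
  (Finset.univ.filter (DigitZero n d)).image fun x => {x, x + d}

theorem mem_shiftMatching {n : ℕ} {d : ZMod (2 ^ n)} {e : Finset (ZMod (2 ^ n))} :
    e ∈ shiftMatching n d ↔ ∃ x, DigitZero n d x ∧ {x, x + d} = e := by
  simp [shiftMatching]

theorem shiftMatching_isPerfectMatching (n : ℕ) (d : ZMod (2 ^ n)) (hd : d ≠ 0) :
    IsPerfectMatching (shiftMatching n d) := by
  refine ⟨?_, ?_, ?_⟩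
  · intro e he
    obtain ⟨x, -, rfl⟩ := mem_shiftMatching.1 he
    exact Finset.card_pair (by simpa using hd)
  · intro e he f hf hef
    obtain ⟨x, hx, rfl⟩ := mem_shiftMatching.1 he
    obtain ⟨y, hy, rfl⟩ := mem_shiftMatching.1 hf
    have hxy : x ≠ y := by rintro rfl; exact hef rfl
    have h1 : x ≠ y + d := by rintro rfl; exact (digitZero_add n d y hd).1 hx hy
    have h2 : y ≠ x + d := by rintro rfl; exact (digitZero_add n d x hd).1 hy hx
    simp [hxy.symm, h1.symm, h2]
  · intro x
    by_cases hx : DigitZero n d x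
    · exact ⟨_, mem_shiftMatching.2 ⟨x, hx, rfl⟩, by simp⟩
    · refine ⟨_, mem_shiftMatching.2 ⟨x - d, ?_, rfl⟩, by simp⟩
      by_contra h
      rw [← digitZero_add n d _ hd, sub_add_cancel] at h
      exact hx h

/-- A pair determines the index of the matching containing it. -/
theorem shiftMatching_inter {n : ℕ} {d d' : ZMod (2 ^ n)} (hd : d ≠ 0)
    {e : Finset (ZMod (2 ^ n))} (he : e ∈ shiftMatching n d) (he' : e ∈ shiftMatching n d') :
    d = d' := by
  obtain ⟨x, hx, rfl⟩ := mem_shiftMatching.1 he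
  obtain ⟨y, hy, hxy⟩ := mem_shiftMatching.1 he'
  have hy' : y = x ∨ y = x + d := by
    have : y ∈ ({x, x + d} : Finset (ZMod (2 ^ n))) := by rw [← hxy]; simp
    simpa using this
  rcases hy' with rfl | rfl
  · have : y + d ∈ ({y, y + d'} : Finset (ZMod (2 ^ n))) := by rw [hxy]; simp
    simpa [hd] using this
  -- The orientation is reversed, so `d' = -d`, and both endpoints would have digit `0`.
  · exfalso
    have : x ∈ ({x + d, x + d + d'} : Finset (ZMod (2 ^ n))) := by rw [hxy]; simp
    have hdd : d' = -d := by
      rcases Finset.mem_insert.1 this with h | h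
      · exact absurd (left_eq_add.1 h) hd
      · rw [Finset.mem_singleton, add_assoc] at h
        exact (neg_eq_of_add_eq_zero_right (left_eq_add.1 h)).symm
    rw [hdd, digitZero_neg] at hy
    exact (digitZero_add n d x hd).1 hy hx

theorem exists_shiftMatching {n : ℕ} {x y : ZMod (2 ^ n)} (hxy : x ≠ y) :
    ∃ d ≠ 0, {x, y} ∈ shiftMatching n d := by
  have hd : y - x ≠ 0 := sub_ne_zero.2 hxy.symm
  by_cases hx : DigitZero n (y - x) x
  · exact ⟨y - x, hd, mem_shiftMatching.2 ⟨x, hx, by simp⟩⟩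
  · refine ⟨x - y, sub_ne_zero.2 hxy, mem_shiftMatching.2 ⟨y, ?_, ?_⟩⟩
    · rw [← digitZero_add n _ _ hd, add_sub_cancel] at hx
      rwa [← neg_sub, digitZero_neg]
    · rw [add_sub_cancel, Finset.pair_comm]


/-- For `n ≥ 2` there is a one-factorization of the complete graph on `ZMod (2^n)`
into `2^n - 1` perfect matchings, each consisting only of pairs of a single fixed
difference `a ∈ {1, ..., 2^(n-1)}`. -/
theorem difference_one_factorization (n : ℕ) (hn : 2 ≤ n) :
    ∃ F : Finset (Finset (Finset (ZMod (2 ^ n)))),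
      F.card = 2 ^ n - 1 ∧
      (∀ M ∈ F, IsPerfectMatching M) ∧
      (∀ M ∈ F, ∀ M' ∈ F, M ≠ M' → Disjoint M M') ∧
      (∀ e : Finset (ZMod (2 ^ n)), (∃ M ∈ F, e ∈ M) ↔ e.card = 2) ∧
      ∀ M ∈ F, ∃ a : ℕ, 1 ≤ a ∧ a ≤ 2 ^ (n - 1) ∧
        ∀ e ∈ M, ∃ x y : ZMod (2 ^ n), e = {x, y} ∧
          (y - x = (a : ZMod (2 ^ n)) ∨ y - x = -(a : ZMod (2 ^ n))) := by
  classical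
  have hne : ∀ d : ZMod (2 ^ n), d ≠ 0 → (shiftMatching n d).Nonempty := fun d hd =>
    let ⟨e, he, _⟩ := (shiftMatching_isPerfectMatching n d hd).2.2 0
    ⟨e, he⟩
  refine ⟨(Finset.univ.erase 0).image (shiftMatching n), ?_, ?_, ?_, ?_, ?_⟩
  · rw [Finset.card_image_of_injOn, Finset.card_erase_of_mem (Finset.mem_univ _),
      Finset.card_univ, ZMod.card]
    intro d hd d' _ h
    have hd0 : d ≠ 0 := by simpa using hd
    obtain ⟨e, he⟩ := hne d hd0
    exact shiftMatching_inter hd0 he (h ▸ he)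
  · simp only [Finset.forall_mem_image]
    exact fun d hd => shiftMatching_isPerfectMatching n d (Finset.ne_of_mem_erase hd)
  · simp only [Finset.forall_mem_image]
    intro d hd d' _ h
    rw [Finset.disjoint_left]
    intro e he he'
    exact h (congrArg _ (shiftMatching_inter (Finset.ne_of_mem_erase hd) he he'))
  · intro e
    simp only [Finset.exists_mem_image]
    constructor
    · rintro ⟨d, hd, he⟩
      exact (shiftMatching_isPerfectMatching n d (Finset.ne_of_mem_erase hd)).1 e he
    · intro he
      obtain ⟨x, y, hxy, rfl⟩ := Finset.card_eq_two.1 he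
      obtain ⟨d, hd, h⟩ := exists_shiftMatching hxy
      exact ⟨d, Finset.mem_erase.2 ⟨hd, Finset.mem_univ _⟩, h⟩
  · simp only [Finset.forall_mem_image]
    intro d hd
    have hd0 : d ≠ 0 := Finset.ne_of_mem_erase hd
    refine ⟨d.valMinAbs.natAbs, ?_, ?_, ?_⟩
    · rw [Nat.one_le_iff_ne_zero]
      simpa using hd0
    · have h := ZMod.natAbs_valMinAbs_le d
      obtain ⟨m, rfl⟩ : ∃ m, n = m + 1 := ⟨n - 1, by omega⟩
      have h2 : 2 ^ (m + 1) / 2 = 2 ^ m := by rw [pow_succ]; simp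
      exact h.trans h2.le
    · intro e he
      obtain ⟨x, -, rfl⟩ := mem_shiftMatching.1 he
      refine ⟨x, x + d, rfl, ?_⟩
      rw [add_sub_cancel_left]
      have hc : ((d.valMinAbs : ℤ) : ZMod (2 ^ n)) = d := ZMod.coe_valMinAbs d
      rcases Int.natAbs_eq d.valMinAbs with h | h
      · left
        rw [h] at hc
        simpa using hc.symm
      · right
        rw [h] at hc
        simpa using hc.symm
end

section
/- Let n ≥ 3 be an integer, let v = 2^n − 7, and let Σ = (X, B) be a Steiner triple system of order v. Then there exists a Steiner triple system Σ' = (X', B') of order 2v + 7 = 2^(n+1) − 7 embedding Σ, i.e., X ⊆ X' with |X'| = 2^(n+1) − 7 and B ⊆ B'. -/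
/-- Every Steiner triple system carries a "third point" operation, and each of its blocks arises
from that operation. -/
lemma IsSTS.exists_third {α : Type*} [DecidableEq α] {X : Finset α} {B : Finset (Finset α)}
    (h : IsSTS X B) : ∃ g : α → α → α,
      (∀ x ∈ X, ∀ y ∈ X, x ≠ y →
        g x y ∈ X ∧ g x y ≠ x ∧ g x y ≠ y ∧ g y x = g x y ∧ g x (g x y) = y) ∧
      ∀ b ∈ B, ∃ x ∈ X, ∃ y ∈ X, x ≠ y ∧ b = {x, y, g x y} := by
  classical
  obtain ⟨h1, h2⟩ := h
  have ex : ∀ x y, ∃ z, x ∈ X → y ∈ X → x ≠ y → {x, y, z} ∈ B := by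
    intro x y
    by_cases hxy : x ∈ X ∧ y ∈ X ∧ x ≠ y
    · obtain ⟨hx, hy, hne⟩ := hxy
      obtain ⟨b, ⟨hb, hsub⟩, -⟩ := h2 {x, y} (by grind) (Finset.card_pair hne)
      obtain ⟨z, hz⟩ : ∃ z, b \ {x, y} = {z} := by
        rw [← Finset.card_eq_one, Finset.card_sdiff_of_subset hsub, (h1 b hb).2,
          Finset.card_pair hne]
      refine ⟨z, fun _ _ _ => ?_⟩
      have : b = {x, y, z} := by
        rw [← Finset.sdiff_union_of_subset hsub, hz]
        grind
      exact this ▸ hb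
    · exact ⟨x, fun a b c => absurd ⟨a, b, c⟩ hxy⟩
  choose g hg using ex
  have mem : ∀ x y z, {x, y, z} ∈ B → x ≠ y → x ∈ X ∧ y ∈ X ∧ z ∈ X ∧ z ≠ x ∧ z ≠ y := by
    intro x y z hb hne
    obtain ⟨hs, hc⟩ := h1 _ hb
    refine ⟨hs (by simp), hs (by simp), hs (by simp), ?_, ?_⟩
    · rintro rfl
      have : ({z, y, z} : Finset α) = {z, y} := by grind
      rw [this, Finset.card_pair hne] at hc
      omega
    · rintro rfl
      have : ({x, z, z} : Finset α) = {x, z} := by grind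
      rw [this, Finset.card_pair hne] at hc
      omega
  have uniq : ∀ x y z, {x, y, z} ∈ B → x ≠ y → g x y = z := by
    intro x y z hb hne
    obtain ⟨hx, hy, -, hzx, hzy⟩ := mem x y z hb hne
    have hb' := hg x y hx hy hne
    obtain ⟨-, -, -, hgx, hgy⟩ := mem x y _ hb' hne
    have e := (h2 {x, y} (by grind) (Finset.card_pair hne)).unique
      ⟨hb, by grind⟩ ⟨hb', by grind⟩
    have : g x y ∈ ({x, y, z} : Finset α) := by rw [e]; simp
    grind
  refine ⟨g, fun x hx y hy hne => ?_, fun b hb => ?_⟩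
  · have hb := hg x y hx hy hne
    obtain ⟨-, -, hz, hzx, hzy⟩ := mem x y _ hb hne
    refine ⟨hz, hzx, hzy, uniq _ _ _ ?_ hne.symm, uniq _ _ _ ?_ hzx.symm⟩
    · rwa [Finset.insert_comm]
    · rwa [Finset.pair_comm]
  · obtain ⟨x, y, z, hxy, -, -, rfl⟩ := Finset.card_eq_three.1 (h1 b hb).2
    obtain ⟨hx, hy, -⟩ := mem x y z hb hxy
    exact ⟨x, hx, y, hy, hxy, by rw [uniq x y z hb hxy]⟩

/-- A "third point" operation on `X` yields a Steiner triple system with blocks `{x, y, g x y}`. -/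
lemma isSTS_of_third {α : Type*} [DecidableEq α] (X : Finset α) (g : α → α → α)
    (h : ∀ x ∈ X, ∀ y ∈ X, x ≠ y →
      g x y ∈ X ∧ g x y ≠ x ∧ g x y ≠ y ∧ g y x = g x y ∧ g x (g x y) = y) :
    IsSTS X (X.offDiag.image fun p => {p.1, p.2, g p.1 p.2}) := by
  refine ⟨fun b hb => ?_, fun p hp hc => ?_⟩
  · simp only [Finset.mem_image, Finset.mem_offDiag] at hb
    obtain ⟨⟨x, y⟩, ⟨hx, hy, hne⟩, rfl⟩ := hb
    obtain ⟨a, b, c, -, -⟩ := h x hx y hy hne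
    exact ⟨by simpa [Finset.insert_subset_iff] using ⟨hx, hy, a⟩,
      Finset.card_eq_three.2 ⟨x, y, g x y, hne, b.symm, c.symm, rfl⟩⟩
  · obtain ⟨x, y, hne, rfl⟩ := Finset.card_eq_two.1 hc
    have hx : x ∈ X := hp (by simp)
    have hy : y ∈ X := hp (by simp)
    refine ⟨{x, y, g x y}, ⟨?_, by simp [Finset.insert_subset_iff]⟩, ?_⟩
    · exact Finset.mem_image.2 ⟨(x, y), Finset.mem_offDiag.2 ⟨hx, hy, hne⟩, rfl⟩
    · rintro b ⟨hb, hsub⟩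
      simp only [Finset.mem_image, Finset.mem_offDiag] at hb
      obtain ⟨⟨u, w⟩, ⟨hu, hw, huw⟩, rfl⟩ := hb
      dsimp only at *
      have hxb : x = u ∨ x = w ∨ x = g u w := by simpa using hsub (show x ∈ _ by simp)
      have hyb : y = u ∨ y = w ∨ y = g u w := by simpa using hsub (show y ∈ _ by simp)
      obtain ⟨a1, a2, a3, a4, a5⟩ := h u hu w hw huw
      obtain ⟨-, -, -, b4, b5⟩ := h w hw u hu huw.symm
      have c4 := (h u hu _ a1 a2.symm).2.2.2.1
      have d4 := (h w hw _ a1 a3.symm).2.2.2.1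
      rw [a4] at b5
      clear h
      rcases hxb with rfl | rfl | rfl <;> rcases hyb with rfl | rfl | rfl <;>
        first
        | exact absurd rfl hne
        | (ext t; simp only [Finset.mem_insert, Finset.mem_singleton] <;> grind)

/-- The affine plane of order 3 minus a point, on the points `0, …, 7`, with `r` and `7 - r`
collinear with the deleted point: for `r < 8` and `1 ≤ d ≤ 6`, the line through `r` and `r ^^^ d`
has third point `r ^^^ planeDiff r d`. -/
def planeDiff (r d : ℕ) : ℕ :=
  (([[0, 5, 3, 2, 6, 1, 4],
    [0, 4, 6, 5, 1, 3, 2],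
    [0, 2, 1, 6, 5, 4, 3],
    [0, 3, 4, 1, 2, 6, 5],
    [0, 3, 4, 1, 2, 6, 5],
    [0, 2, 1, 6, 5, 4, 3],
    [0, 4, 6, 5, 1, 3, 2],
    [0, 5, 3, 2, 6, 1, 4]] : List (List ℕ))[r]!)[d]!

lemma planeDiff_spec (r d : ℕ) (hr : r < 8) (hd : d < 7) (hd0 : d ≠ 0) :
    planeDiff r d < 7 ∧ planeDiff r d ≠ 0 ∧ planeDiff r d ≠ d ∧
      planeDiff r (planeDiff r d) = d ∧ d ^^^ planeDiff (r ^^^ d) d = planeDiff r d := by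
  have : ∀ r < 8, ∀ d < 7, d ≠ 0 → planeDiff r d < 7 ∧ planeDiff r d ≠ 0 ∧ planeDiff r d ≠ d ∧
      planeDiff r (planeDiff r d) = d ∧ d ^^^ planeDiff (r ^^^ d) d = planeDiff r d := by decide
  exact this r hr d hd hd0

/-- The third point operation of the enlarged system: `g` is the operation on the old points, `φ`
matches old points with the differences `≥ 7` of new points, and `ψ` is its inverse. -/
def extThird {α : Type*} (g : α → α → α) (φ : α → ℕ) (ψ : ℕ → α) : α ⊕ ℕ → α ⊕ ℕ → α ⊕ ℕ
  | .inl a, .inl b => .inl (g a b)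
  | .inl a, .inr y => .inr (y ^^^ φ a)
  | .inr x, .inl b => .inr (x ^^^ φ b)
  | .inr x, .inr y =>
    if x ^^^ y < 7 then .inr (x ^^^ planeDiff (x % 8) (x ^^^ y)) else .inl (ψ (x ^^^ y))

/-- Given an STS of order `v = 2^n - 7` (`n ≥ 3`), there exists an STS of order
`2v + 7 = 2^(n+1) - 7` embedding it. -/
theorem sts_doubling_plus_seven {α : Type*} [DecidableEq α] (n : ℕ) (hn : 3 ≤ n)
    (X : Finset α) (B : Finset (Finset α)) (hSTS : IsSTS X B) (hX : X.card = 2 ^ n - 7) :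
    ∃ (X' : Finset (α ⊕ ℕ)) (B' : Finset (Finset (α ⊕ ℕ))),
      IsSTS X' B' ∧ X'.card = 2 ^ (n + 1) - 7 ∧
      X.image Sum.inl ⊆ X' ∧ B.image (Finset.image Sum.inl) ⊆ B' := by
  classical
  obtain ⟨g, hg, hB⟩ := hSTS.exists_third
  have h8 : 8 ≤ 2 ^ n := by
    calc 8 = 2 ^ 3 := by norm_num
      _ ≤ 2 ^ n := Nat.pow_le_pow_right (by norm_num) hn
  have hcard : X.card = (Finset.Ico 7 (2 ^ n)).card := by simp [hX]
  have hXne : X.Nonempty := Finset.card_pos.1 (by omega)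
  have : Nonempty α := ⟨hXne.choose⟩
  obtain ⟨φ, hφ⟩ : ∃ φ : α → ℕ, Set.BijOn φ X (Finset.Ico 7 (2 ^ n)) :=
    X.finite_toSet.exists_bijOn_of_encard_eq
      (by rw [Set.encard_coe_eq_coe_finsetCard, Set.encard_coe_eq_coe_finsetCard, hcard])
  set ψ := Function.invFunOn φ (X : Set α) with hψ
  have hφm : ∀ a ∈ X, 7 ≤ φ a ∧ φ a < 2 ^ n := fun a ha => by simpa using hφ.mapsTo ha
  have hψm : ∀ d, 7 ≤ d → d < 2 ^ n → ψ d ∈ X ∧ φ (ψ d) = d := fun d h1 h2 => by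
    have hd : d ∈ φ '' (X : Set α) := hφ.surjOn (by simp [h1, h2])
    exact ⟨by simpa using Function.invFunOn_mem hd, Function.invFunOn_eq hd⟩
  have hψφ : ∀ a ∈ X, ψ (φ a) = a := fun a ha =>
    hφ.injOn (by simpa using (hψm _ (hφm a ha).1 (hφm a ha).2).1) (by simpa using ha)
      (hψm _ (hφm a ha).1 (hφm a ha).2).2
  have key : ∀ x ∈ X.disjSum (Finset.range (2 ^ n)), ∀ y ∈ X.disjSum (Finset.range (2 ^ n)),
      x ≠ y → extThird g φ ψ x y ∈ X.disjSum (Finset.range (2 ^ n)) ∧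
        extThird g φ ψ x y ≠ x ∧ extThird g φ ψ x y ≠ y ∧
        extThird g φ ψ y x = extThird g φ ψ x y ∧
        extThird g φ ψ x (extThird g φ ψ x y) = y := by
    rintro (a | x) hx (b | y) hy hne
    · have := hg a (by simpa using hx) b (by simpa using hy) (by simpa using hne)
      simpa [extThird] using this
    · have ha : a ∈ X := by simpa using hx
      have hy : y < 2 ^ n := by simpa using hy
      obtain ⟨h7, h2⟩ := hφm a ha
      have h0 : φ a ≠ 0 := by omega
      simpa [extThird, Nat.xor_assoc, h0] using Nat.xor_lt_two_pow hy h2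
    · have hb : b ∈ X := by simpa using hy
      have hx : x < 2 ^ n := by simpa using hx
      obtain ⟨h7, h2⟩ := hφm b hb
      have h0 : φ b ≠ 0 := by omega
      simpa [extThird, ← Nat.xor_assoc, h0, not_lt.2 h7, hψφ b hb] using Nat.xor_lt_two_pow hx h2
    · have hx : x < 2 ^ n := by simpa using hx
      have hy : y < 2 ^ n := by simpa using hy
      have hne : x ≠ y := by simpa using hne
      -- Work with the difference `d`, so that `y = x ^^^ d`.
      obtain ⟨d, rfl⟩ : ∃ d, y = x ^^^ d := ⟨x ^^^ y, by simp [← Nat.xor_assoc]⟩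
      have hd0 : d ≠ 0 := by rintro rfl; simp at hne
      have hd : d < 2 ^ n := by simpa [← Nat.xor_assoc] using Nat.xor_lt_two_pow hx hy
      have e1 : x ^^^ (x ^^^ d) = d := by simp [← Nat.xor_assoc]
      have e2 : (x ^^^ d) ^^^ x = d := by rw [Nat.xor_comm, e1]
      by_cases h7 : d < 7
      · obtain ⟨p1, p2, p3, p4, p5⟩ := planeDiff_spec (x % 8) d (Nat.mod_lt _ (by norm_num)) h7 hd0
        have hm : (x ^^^ d) % 8 = x % 8 ^^^ d := by
          have := Nat.xor_mod_two_pow (a := x) (b := d) (n := 3)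
          norm_num at this
          rw [this, Nat.mod_eq_of_lt (by omega : d < 8)]
        have e3 : x ^^^ (x ^^^ planeDiff (x % 8) d) = planeDiff (x % 8) d := by
          simp [← Nat.xor_assoc]
        simp only [extThird, e1, e2, h7, if_true, hm, e3, p1, p4, Nat.xor_assoc, p5]
        refine ⟨?_, ?_, ?_, trivial, trivial⟩
        · simpa using Nat.xor_lt_two_pow hx (by omega : planeDiff (x % 8) d < 2 ^ n)
        · simpa using p2
        · simpa using p3
      · obtain ⟨q1, q2⟩ := hψm d (by omega) hd
        simp [extThird, e1, e2, h7, q1, q2]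
  refine ⟨X.disjSum (Finset.range (2 ^ n)), _, isSTS_of_third _ _ key, ?_, ?_, ?_⟩
  · rw [Finset.card_disjSum, hX, Finset.card_range, pow_succ]
    omega
  · intro z hz
    obtain ⟨a, ha, rfl⟩ := Finset.mem_image.1 hz
    simpa using ha
  · intro z hz
    obtain ⟨b, hb, rfl⟩ := Finset.mem_image.1 hz
    obtain ⟨x, hx, y, hy, hxy, rfl⟩ := hB b hb
    refine Finset.mem_image.2 ⟨(.inl x, .inl y), ?_, ?_⟩
    · simpa [Finset.mem_offDiag] using ⟨hx, hy, hxy⟩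
    · simp [extThird, Finset.image_insert]
end

section
/- Let n ≥ 4 be an integer, let v = 2^n − 7, and let Σ = (X, B) be a Steiner triple system of order v having a maximal independent set T with |T| = (v − 1)/2. Then, setting v' = 2^(n+1) − 7, there exists a Steiner triple system Σ' = (X', B') of order v' embedding Σ together with a maximal independent set T' of Σ' such that T ⊆ T' and |T'| = (v' − 1)/2. -/
/-- An independent set of an STS: a subset of the points containing no block. -/
def IsIndepSet {α : Type*} [DecidableEq α] (X : Finset α) (B : Finset (Finset α))
    (T : Finset α) : Prop :=
  T ⊆ X ∧ ∀ b ∈ B, ¬ b ⊆ T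

/-- A maximal independent set: an independent set not properly contained in
another independent set. -/
def IsMaxIndepSet {α : Type*} [DecidableEq α] (X : Finset α) (B : Finset (Finset α))
    (T : Finset α) : Prop :=
  IsIndepSet X B T ∧ ∀ T' : Finset α, IsIndepSet X B T' → T ⊆ T' → T' = T

/-- A group divisible design of type `2⁴` on `{0, …, 7}` with groups `{0,1}, {2,3}, {4,5}, {6,7}`:
each pair from distinct groups lies in exactly one triple. -/
def baseTriples : Finset (Finset ℕ) :=
  {{0, 2, 4}, {1, 3, 5}, {0, 3, 6}, {1, 2, 7}, {0, 5, 7}, {1, 4, 6}, {2, 5, 6}, {3, 4, 7}}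

/-- Copies of `baseTriples` on the blocks `{8k, …, 8k + 7}` for `k < m`. -/
def cosetTriples (m : ℕ) : Finset (Finset ℕ) :=
  (Finset.range m ×ˢ baseTriples).image fun q => q.2.image (8 * q.1 + ·)

/-- The differences whose matchings are joined to old points. -/
def differences (N : ℕ) : Finset ℕ := (Finset.range N).filter fun d => d = 1 ∨ 8 ≤ d

/-- The differences assigned to the points of the independent set: those lying outside the
hyperplane `d % 8 < 4`. -/
def outerDifferences (N : ℕ) : Finset ℕ := (Finset.range N).filter fun d => 8 ≤ d ∧ 4 ≤ d % 8

/-- The hyperplane of numbers whose bit 2 vanishes. -/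
def hyperplane (N : ℕ) : Finset ℕ := (Finset.range N).filter fun y => y % 8 < 4

/-! ### Triples inside the cosets -/

lemma baseTriples_lt : ∀ b ∈ baseTriples, ∀ i ∈ b, i < 8 := by decide

lemma baseTriples_card : ∀ b ∈ baseTriples, b.card = 3 := by decide

lemma baseTriples_exists : ∀ i ∈ Finset.range 8, ∀ j ∈ Finset.range 8, i ≠ j → i ^^^ j ≠ 1 →
    ∃ b ∈ baseTriples, i ∈ b ∧ j ∈ b := by decide

lemma baseTriples_unique : ∀ i ∈ Finset.range 8, ∀ j ∈ Finset.range 8, i ≠ j →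
    ∀ b ∈ baseTriples, ∀ c ∈ baseTriples, i ∈ b → j ∈ b → i ∈ c → j ∈ c → b = c := by decide

lemma baseTriples_xor_ne_one : ∀ b ∈ baseTriples, ∀ i ∈ b, ∀ j ∈ b, i ^^^ j ≠ 1 := by decide

lemma baseTriples_exists_ge : ∀ b ∈ baseTriples, ∃ i ∈ b, 4 ≤ i := by decide

lemma mem_cosetTriples {m : ℕ} {t : Finset ℕ} : t ∈ cosetTriples m ↔
    ∃ k < m, ∃ b ∈ baseTriples, t = b.image (8 * k + ·) := by
  simp only [cosetTriples, Finset.mem_image, Finset.mem_product, Finset.mem_range, Prod.exists]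
  constructor
  · rintro ⟨k, b, ⟨hk, hb⟩, rfl⟩
    exact ⟨k, hk, b, hb, rfl⟩
  · rintro ⟨k, hk, b, hb, rfl⟩
    exact ⟨k, b, ⟨hk, hb⟩, rfl⟩

lemma mem_shift {b : Finset ℕ} (hb : b ∈ baseTriples) {k y : ℕ} :
    y ∈ b.image (8 * k + ·) ↔ y / 8 = k ∧ y % 8 ∈ b := by
  simp only [Finset.mem_image]
  constructor
  · rintro ⟨i, hi, rfl⟩
    have := baseTriples_lt b hb i hi
    have h1 : (8 * k + i) / 8 = k := by omega
    have h2 : (8 * k + i) % 8 = i := by omega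
    exact ⟨h1, h2.symm ▸ hi⟩
  · rintro ⟨rfl, h⟩
    exact ⟨_, h, by omega⟩

lemma xor_mod_eight (a b : ℕ) : (a ^^^ b) % 8 = (a % 8) ^^^ (b % 8) :=
  Nat.xor_mod_two_pow (n := 3)

lemma xor_div_eight (a b : ℕ) : (a ^^^ b) / 8 = (a / 8) ^^^ (b / 8) :=
  Nat.xor_div_two_pow (n := 3)

lemma cosetTriples_lt {m : ℕ} {t : Finset ℕ} (ht : t ∈ cosetTriples m) {y : ℕ} (hy : y ∈ t) :
    y < 8 * m := by
  obtain ⟨k, hk, b, hb, rfl⟩ := mem_cosetTriples.1 ht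
  have := (mem_shift hb).1 hy
  omega

lemma cosetTriples_card {m : ℕ} {t : Finset ℕ} (ht : t ∈ cosetTriples m) : t.card = 3 := by
  obtain ⟨k, hk, b, hb, rfl⟩ := mem_cosetTriples.1 ht
  rw [Finset.card_image_of_injective _ (add_right_injective _), baseTriples_card b hb]

lemma cosetTriples_exists {m y z : ℕ} (hy : y < 8 * m) (hne : y ≠ z)
    (h8 : y ^^^ z < 8) (h1 : y ^^^ z ≠ 1) : ∃ t ∈ cosetTriples m, y ∈ t ∧ z ∈ t := by
  have hd : y / 8 = z / 8 := by
    have := xor_div_eight y z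
    rw [Nat.div_eq_of_lt h8] at this
    exact Nat.xor_eq_zero_iff.1 this.symm
  have hm : (y % 8) ^^^ (z % 8) ≠ 1 := by
    rw [← xor_mod_eight, Nat.mod_eq_of_lt h8]; exact h1
  obtain ⟨b, hb, hi, hj⟩ := baseTriples_exists (y % 8) (by simp; omega) (z % 8) (by simp; omega)
    (by omega) hm
  exact ⟨_, mem_cosetTriples.2 ⟨y / 8, by omega, b, hb, rfl⟩,
    (mem_shift hb).2 ⟨rfl, hi⟩, (mem_shift hb).2 ⟨hd.symm, hj⟩⟩

lemma cosetTriples_unique {m y z : ℕ} (hne : y ≠ z) {t u : Finset ℕ}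
    (ht : t ∈ cosetTriples m) (hu : u ∈ cosetTriples m)
    (h1 : y ∈ t) (h2 : z ∈ t) (h3 : y ∈ u) (h4 : z ∈ u) : t = u := by
  obtain ⟨k, hk, b, hb, rfl⟩ := mem_cosetTriples.1 ht
  obtain ⟨l, hl, c, hc, rfl⟩ := mem_cosetTriples.1 hu
  rw [mem_shift hb] at h1 h2
  rw [mem_shift hc] at h3 h4
  have := baseTriples_unique (y % 8) (by simp; omega) (z % 8) (by simp; omega) (by omega) b hb c hc
    h1.2 h2.2 h3.2 h4.2
  rw [this, ← h1.1, ← h3.1]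

lemma cosetTriples_xor_notMem {m N y z : ℕ} {t : Finset ℕ}
    (ht : t ∈ cosetTriples m) (h1 : y ∈ t) (h2 : z ∈ t) : y ^^^ z ∉ differences N := by
  obtain ⟨k, hk, b, hb, rfl⟩ := mem_cosetTriples.1 ht
  rw [mem_shift hb] at h1 h2
  have hdiv : (y ^^^ z) / 8 = 0 := by rw [xor_div_eight, h1.1, h2.1, Nat.xor_self]
  have hmod := baseTriples_xor_ne_one b hb _ h1.2 _ h2.2
  rw [← xor_mod_eight] at hmod
  simp only [differences, Finset.mem_filter]
  omega

lemma cosetTriples_exists_ge {m : ℕ} {t : Finset ℕ} (ht : t ∈ cosetTriples m) :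
    ∃ y ∈ t, 4 ≤ y % 8 := by
  obtain ⟨k, hk, b, hb, rfl⟩ := mem_cosetTriples.1 ht
  obtain ⟨i, hi, h4⟩ := baseTriples_exists_ge b hb
  have := baseTriples_lt b hb i hi
  exact ⟨8 * k + i, Finset.mem_image_of_mem _ hi, by omega⟩

/-! ### The hyperplane and the differences -/

lemma xor_bit_two {a b : ℕ} (ha : a % 8 < 4) (hb : 4 ≤ b % 8) : 4 ≤ (a ^^^ b) % 8 := by
  rw [xor_mod_eight]
  have key : ∀ i < 4, ∀ j < 8, 4 ≤ j → 4 ≤ i ^^^ j := by decide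
  exact key _ ha _ (by omega) hb

lemma xor_bit_two' {a b : ℕ} (ha : 4 ≤ a % 8) (hb : 4 ≤ b % 8) : (a ^^^ b) % 8 < 4 := by
  rw [xor_mod_eight]
  have key : ∀ i < 8, 4 ≤ i → ∀ j < 8, 4 ≤ j → i ^^^ j < 4 := by decide
  exact key _ (by omega) ha _ (by omega) hb

lemma card_hyperplane (m : ℕ) : (hyperplane (8 * m)).card = 4 * m := by
  induction m with
  | zero => rfl
  | succ m ih =>
    have : hyperplane (8 * (m + 1)) = hyperplane (8 * m) ∪ (Finset.range 4).image (8 * m + ·) := by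
      ext y
      simp only [hyperplane, Finset.mem_filter, Finset.mem_range, Finset.mem_union,
        Finset.mem_image]
      constructor
      · rintro ⟨h1, h2⟩
        by_cases h : y < 8 * m
        · exact Or.inl ⟨h, h2⟩
        · exact Or.inr ⟨y - 8 * m, by omega, by omega⟩
      · rintro (h | ⟨i, hi, rfl⟩) <;> omega
    rw [this, Finset.card_union_of_disjoint, ih,
      Finset.card_image_of_injective _ (add_right_injective _), Finset.card_range]
    · ring
    · rw [Finset.disjoint_left]
      intro y hy hy'
      simp only [hyperplane, Finset.mem_filter, Finset.mem_range, Finset.mem_image] at hy hy'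
      obtain ⟨i, hi, rfl⟩ := hy'
      omega

lemma card_differences (m : ℕ) (hm : 1 ≤ m) : (differences (8 * m)).card = 8 * m - 7 := by
  have : differences (8 * m) = insert 1 (Finset.Ico 8 (8 * m)) := by
    ext d
    simp only [differences, Finset.mem_filter, Finset.mem_range, Finset.mem_insert, Finset.mem_Ico]
    omega
  rw [this, Finset.card_insert_of_notMem (by simp), Nat.card_Ico]
  omega

lemma card_outerDifferences (m : ℕ) (hm : 1 ≤ m) :
    (outerDifferences (8 * m)).card = 4 * m - 4 := by
  -- `{4, 5, 6, 7}` together with the outer differences is the complement of the hyperplane.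
  have h : outerDifferences (8 * m) ∪ Finset.Ico 4 8 = Finset.range (8 * m) \ hyperplane (8 * m) := by
    ext d
    simp only [outerDifferences, hyperplane, Finset.mem_filter, Finset.mem_range, Finset.mem_union,
      Finset.mem_sdiff, Finset.mem_Ico]
    omega
  have hd : Disjoint (outerDifferences (8 * m)) (Finset.Ico 4 8) := by
    rw [Finset.disjoint_left]
    intro d hd
    simp only [outerDifferences, Finset.mem_filter, Finset.mem_Ico] at hd ⊢
    omega
  have hc := congrArg Finset.card h
  rw [Finset.card_union_of_disjoint hd, Nat.card_Ico,
    Finset.card_sdiff_of_subset (by exact Finset.filter_subset _ _), card_hyperplane,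
    Finset.card_range] at hc
  omega

/-- Equinumerous sets with equinumerous subsets are matched by a bijection respecting the
subsets. -/
lemma exists_bijOn_pair {α : Type*} [DecidableEq α] {X T : Finset α} {D E : Finset ℕ}
    (hTX : T ⊆ X) (hED : E ⊆ D) (hc : X.card = D.card) (hc' : T.card = E.card) :
    ∃ φ : α → ℕ, (∀ x ∈ X, φ x ∈ D) ∧ (∀ x ∈ X, ∀ y ∈ X, φ x = φ y → x = y) ∧
      (∀ d ∈ D, ∃ x ∈ X, φ x = d) ∧ (∀ x ∈ T, φ x ∈ E) ∧ (∀ d ∈ E, ∃ x ∈ T, φ x = d) := by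
  have e1 : T ≃ E := Finset.equivOfCardEq hc'
  have e2 : (X \ T : Finset α) ≃ (D \ E : Finset ℕ) := Finset.equivOfCardEq (by
    rw [Finset.card_sdiff_of_subset hTX, Finset.card_sdiff_of_subset hED, hc, hc'])
  let φ : α → ℕ := fun x => if h : x ∈ T then e1 ⟨x, h⟩ else
    if h' : x ∈ X \ T then e2 ⟨x, h'⟩ else 0
  have hφ1 : ∀ x (h : x ∈ T), φ x = e1 ⟨x, h⟩ := fun x h => by simp only [φ, dif_pos h]
  have hφ2 : ∀ x (h : x ∈ X \ T), φ x = e2 ⟨x, h⟩ := fun x h => by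
    simp only [φ, dif_neg (Finset.mem_sdiff.1 h).2, dif_pos h]
  have hE : ∀ x ∈ T, φ x ∈ E := fun x h => by rw [hφ1 x h]; exact (e1 _).2
  have hDE : ∀ x ∈ X \ T, φ x ∈ D \ E := fun x h => by rw [hφ2 x h]; exact (e2 _).2
  have hE' : ∀ d ∈ E, ∃ x ∈ T, φ x = d := fun d hd =>
    ⟨e1.symm ⟨d, hd⟩, (e1.symm _).2, by rw [hφ1 _ (e1.symm _).2]; simp⟩
  refine ⟨φ, ?_, ?_, ?_, hE, hE'⟩
  · intro x hx
    by_cases h : x ∈ T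
    · exact hED (hE x h)
    · exact (Finset.mem_sdiff.1 (hDE x (Finset.mem_sdiff.2 ⟨hx, h⟩))).1
  · intro x hx y hy hxy
    by_cases h : x ∈ T <;> by_cases h' : y ∈ T
    · rw [hφ1 x h, hφ1 y h'] at hxy
      simpa using e1.injective (Subtype.ext hxy)
    · have := hDE y (Finset.mem_sdiff.2 ⟨hy, h'⟩)
      rw [← hxy] at this
      exact absurd (hE x h) (Finset.mem_sdiff.1 this).2
    · have := hDE x (Finset.mem_sdiff.2 ⟨hx, h⟩)
      rw [hxy] at this
      exact absurd (hE y h') (Finset.mem_sdiff.1 this).2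
    · rw [hφ2 x (Finset.mem_sdiff.2 ⟨hx, h⟩), hφ2 y (Finset.mem_sdiff.2 ⟨hy, h'⟩)] at hxy
      simpa using e2.injective (Subtype.ext hxy)
  · intro d hd
    by_cases h : d ∈ E
    · obtain ⟨x, hx, hxd⟩ := hE' d h
      exact ⟨x, hTX hx, hxd⟩
    · have hd' : d ∈ D \ E := Finset.mem_sdiff.2 ⟨hd, h⟩
      have hm := (e2.symm ⟨d, hd'⟩).2
      exact ⟨e2.symm ⟨d, hd'⟩, (Finset.mem_sdiff.1 hm).1, by rw [hφ2 _ hm]; simp⟩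

/-! ### The extended system -/

section Extension

variable {α : Type*} [DecidableEq α]

/-- The old points together with `N` new ones. -/
def extPoints (X : Finset α) (N : ℕ) : Finset (α ⊕ ℕ) :=
  X.image Sum.inl ∪ (Finset.range N).image Sum.inr

/-- The block through the old point `x` and the new points `y` and `y ^^^ φ x`. -/
def joinBlock (φ : α → ℕ) (x : α) (y : ℕ) : Finset (α ⊕ ℕ) :=
  {Sum.inl x, Sum.inr y, Sum.inr (y ^^^ φ x)}

/-- The old blocks, the joined matchings, and the coset triples. -/
def extBlocks (X : Finset α) (B : Finset (Finset α)) (φ : α → ℕ) (m : ℕ) :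
    Finset (Finset (α ⊕ ℕ)) :=
  B.image (Finset.image Sum.inl) ∪
    ((X ×ˢ Finset.range (8 * m)).image fun q => joinBlock φ q.1 q.2) ∪
    (cosetTriples m).image (Finset.image Sum.inr)

variable {X : Finset α} {B : Finset (Finset α)} {φ : α → ℕ} {m : ℕ}

lemma mem_extBlocks {b : Finset (α ⊕ ℕ)} : b ∈ extBlocks X B φ m ↔
    (∃ c ∈ B, b = c.image Sum.inl) ∨ (∃ x ∈ X, ∃ y < 8 * m, b = joinBlock φ x y) ∨
      ∃ t ∈ cosetTriples m, b = t.image Sum.inr := by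
  simp only [extBlocks, Finset.mem_union, Finset.mem_image, Finset.mem_product, Finset.mem_range,
    Prod.exists, or_assoc]
  constructor
  · rintro (⟨c, hc, rfl⟩ | ⟨x, y, ⟨hx, hy⟩, rfl⟩ | ⟨t, ht, rfl⟩)
    · exact Or.inl ⟨c, hc, rfl⟩
    · exact Or.inr (Or.inl ⟨x, hx, y, hy, rfl⟩)
    · exact Or.inr (Or.inr ⟨t, ht, rfl⟩)
  · rintro (⟨c, hc, rfl⟩ | ⟨x, hx, y, hy, rfl⟩ | ⟨t, ht, rfl⟩)
    · exact Or.inl ⟨c, hc, rfl⟩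
    · exact Or.inr (Or.inl ⟨x, y, ⟨hx, hy⟩, rfl⟩)
    · exact Or.inr (Or.inr ⟨t, ht, rfl⟩)

lemma inl_mem_joinBlock {x a : α} {y : ℕ} : Sum.inl a ∈ joinBlock φ x y ↔ a = x := by
  simp [joinBlock]

lemma inr_mem_joinBlock {x : α} {y z : ℕ} :
    Sum.inr z ∈ joinBlock φ x y ↔ z = y ∨ z = y ^^^ φ x := by
  simp [joinBlock]

lemma joinBlock_eq_of_mem {x : α} {y z : ℕ} (h : Sum.inr z ∈ joinBlock φ x y) :
    joinBlock φ x z = joinBlock φ x y := by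
  rcases inr_mem_joinBlock.1 h with rfl | rfl
  · rfl
  · simp only [joinBlock, Nat.xor_xor_cancel_right]
    rw [Finset.pair_comm]

/-- Two distinct new points of a joining block differ by the difference of its old point. -/
lemma xor_eq_of_mem_joinBlock {x : α} {y z w : ℕ} (hne : z ≠ w)
    (hz : Sum.inr z ∈ joinBlock φ x y) (hw : Sum.inr w ∈ joinBlock φ x y) : z ^^^ w = φ x := by
  rw [← joinBlock_eq_of_mem hz, inr_mem_joinBlock] at hw
  rcases hw with rfl | rfl
  · exact absurd rfl hne
  · rw [← Nat.xor_assoc, Nat.xor_self, Nat.zero_xor]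

/-- To verify the pair condition of a Steiner triple system it suffices to treat pairs of distinct
points. -/
lemma isSTS_of_pairs {β : Type*} [DecidableEq β] {P : Finset β} {C : Finset (Finset β)}
    (h1 : ∀ b ∈ C, b ⊆ P ∧ b.card = 3)
    (h2 : ∀ p ∈ P, ∀ q ∈ P, p ≠ q → ∃! b, b ∈ C ∧ p ∈ b ∧ q ∈ b) : IsSTS P C := by
  refine ⟨h1, fun s hs hc => ?_⟩
  obtain ⟨p, q, hpq, rfl⟩ := Finset.card_eq_two.1 hc
  have := h2 p (hs (by simp)) q (hs (by simp)) hpq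
  simpa [Finset.insert_subset_iff] using this

lemma IsSTS.pair (h : IsSTS X B) {p q : α} (hp : p ∈ X) (hq : q ∈ X) (hpq : p ≠ q) :
    ∃! b, b ∈ B ∧ p ∈ b ∧ q ∈ b := by
  have := h.2 {p, q} (by simp [Finset.insert_subset_iff, hp, hq]) (Finset.card_pair hpq)
  simpa [Finset.insert_subset_iff] using this

lemma isSTS_ext (h : IsSTS X B) {n : ℕ} (hn : 2 ^ n = 8 * m)
    (hD : ∀ x ∈ X, φ x ∈ differences (8 * m))
    (hinj : ∀ x ∈ X, ∀ y ∈ X, φ x = φ y → x = y)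
    (hsurj : ∀ d ∈ differences (8 * m), ∃ x ∈ X, φ x = d) :
    IsSTS (extPoints X (8 * m)) (extBlocks X B φ m) := by
  have hxor : ∀ {a b : ℕ}, a < 8 * m → b < 8 * m → a ^^^ b < 8 * m := by
    intro a b ha hb
    rw [← hn] at *
    exact Nat.xor_lt_two_pow ha hb
  have hDlt : ∀ x ∈ X, φ x < 8 * m ∧ φ x ≠ 0 := by
    intro x hx
    have := hD x hx
    simp only [differences, Finset.mem_filter, Finset.mem_range] at this
    omega
  -- The unique block through an old and a new point.
  have mixed : ∀ x ∈ X, ∀ y < 8 * m,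
      ∃! b, b ∈ extBlocks X B φ m ∧ Sum.inl x ∈ b ∧ Sum.inr y ∈ b := by
    intro x hx y hy
    refine ⟨joinBlock φ x y, ⟨mem_extBlocks.2 (Or.inr (Or.inl ⟨x, hx, y, hy, rfl⟩)),
      inl_mem_joinBlock.2 rfl, inr_mem_joinBlock.2 (Or.inl rfl)⟩, ?_⟩
    rintro b ⟨hb, hxb, hyb⟩
    rcases mem_extBlocks.1 hb with ⟨c, hc, rfl⟩ | ⟨x', hx', y', hy', rfl⟩ | ⟨t, ht, rfl⟩
    · simp at hyb
    · obtain rfl := inl_mem_joinBlock.1 hxb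
      exact (joinBlock_eq_of_mem hyb).symm
    · simp at hxb
  apply isSTS_of_pairs
  · intro b hb
    rcases mem_extBlocks.1 hb with ⟨c, hc, rfl⟩ | ⟨x, hx, y, hy, rfl⟩ | ⟨t, ht, rfl⟩
    · refine ⟨(Finset.image_subset_image (h.1 c hc).1).trans Finset.subset_union_left, ?_⟩
      rw [Finset.card_image_of_injective _ Sum.inl_injective, (h.1 c hc).2]
    · constructor
      · have := hxor hy (hDlt x hx).1
        simp [joinBlock, extPoints, Finset.insert_subset_iff, hx, hy, this]
      · have : y ≠ y ^^^ φ x := by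
          intro he
          have h0 : y ^^^ y = y ^^^ (y ^^^ φ x) := congrArg (y ^^^ ·) he
          rw [← Nat.xor_assoc, Nat.xor_self, Nat.zero_xor] at h0
          exact (hDlt x hx).2 h0.symm
        exact Finset.card_eq_three.2 ⟨_, _, _, by simp, by simp, by simpa using this, rfl⟩
    · refine ⟨?_, ?_⟩
      · refine (Finset.image_subset_image fun y hy => ?_).trans Finset.subset_union_right
        exact Finset.mem_range.2 (cosetTriples_lt ht hy)
      · rw [Finset.card_image_of_injective _ Sum.inr_injective, cosetTriples_card ht]
  · rintro (p | p) hp (q | q) hq hpq <;> simp [extPoints] at hp hq hpq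
    · obtain ⟨c, ⟨hc, hpc, hqc⟩, hu⟩ := h.pair hp hq hpq
      refine ⟨c.image Sum.inl, ⟨mem_extBlocks.2 (Or.inl ⟨c, hc, rfl⟩),
        Finset.mem_image_of_mem _ hpc, Finset.mem_image_of_mem _ hqc⟩, ?_⟩
      rintro b ⟨hb, hpb, hqb⟩
      rcases mem_extBlocks.1 hb with ⟨c', hc', rfl⟩ | ⟨x', hx', y', hy', rfl⟩ | ⟨t, ht, rfl⟩
      · rw [hu c' ⟨hc', by simpa using hpb, by simpa using hqb⟩]
      · exact absurd ((inl_mem_joinBlock.1 hpb).trans (inl_mem_joinBlock.1 hqb).symm) hpq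
      · simp at hpb
    · exact mixed p hp q hq
    · obtain ⟨b, hb, hu⟩ := mixed q hq p hp
      exact ⟨b, ⟨hb.1, hb.2.2, hb.2.1⟩, fun c hc => hu c ⟨hc.1, hc.2.2, hc.2.1⟩⟩
    · by_cases hd : p ^^^ q ∈ differences (8 * m)
      · obtain ⟨x, hx, hxd⟩ := hsurj _ hd
        have hq' : q = p ^^^ φ x := by
          rw [hxd, ← Nat.xor_assoc, Nat.xor_self, Nat.zero_xor]
        refine ⟨joinBlock φ x p, ⟨mem_extBlocks.2 (Or.inr (Or.inl ⟨x, hx, p, hp, rfl⟩)),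
          inr_mem_joinBlock.2 (Or.inl rfl), inr_mem_joinBlock.2 (Or.inr hq')⟩, ?_⟩
        rintro b ⟨hb, hpb, hqb⟩
        rcases mem_extBlocks.1 hb with ⟨c, hc, rfl⟩ | ⟨x', hx', y', hy', rfl⟩ | ⟨t, ht, rfl⟩
        · simp at hpb
        · obtain rfl := hinj x hx x' hx' (hxd.trans (xor_eq_of_mem_joinBlock hpq hpb hqb))
          exact (joinBlock_eq_of_mem hpb).symm
        · exact absurd hd (cosetTriples_xor_notMem ht (by simpa using hpb) (by simpa using hqb))
      · have hd' := hd
        have hlt := hxor hp hq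
        simp only [differences, Finset.mem_filter, Finset.mem_range, not_and, not_or] at hd'
        obtain ⟨t, ht, hpt, hqt⟩ := cosetTriples_exists hp hpq (by have := hd' hlt; omega)
          (hd' hlt).1
        refine ⟨t.image Sum.inr, ⟨mem_extBlocks.2 (Or.inr (Or.inr ⟨t, ht, rfl⟩)),
          Finset.mem_image_of_mem _ hpt, Finset.mem_image_of_mem _ hqt⟩, ?_⟩
        rintro b ⟨hb, hpb, hqb⟩
        rcases mem_extBlocks.1 hb with ⟨c, hc, rfl⟩ | ⟨x', hx', y', hy', rfl⟩ | ⟨u, hu, rfl⟩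
        · simp at hpb
        · rw [xor_eq_of_mem_joinBlock hpq hpb hqb] at hd
          exact absurd (hD x' hx') hd
        · rw [cosetTriples_unique hpq ht hu hpt hqt (by simpa using hpb) (by simpa using hqb)]

/-- `T` together with the hyperplane of the new points. -/
def extIndep (T : Finset α) (N : ℕ) : Finset (α ⊕ ℕ) :=
  T.image Sum.inl ∪ (hyperplane N).image Sum.inr

lemma inl_mem_extIndep {T : Finset α} {N : ℕ} {x : α} :
    Sum.inl x ∈ extIndep T N ↔ x ∈ T := by
  simp [extIndep]

lemma inr_mem_extIndep {T : Finset α} {N y : ℕ} :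
    Sum.inr y ∈ extIndep T N ↔ y < N ∧ y % 8 < 4 := by
  simp [extIndep, hyperplane]

lemma isMaxIndepSet_ext {T : Finset α} (hT : IsMaxIndepSet X B T) {n : ℕ} (hn : 2 ^ n = 8 * m)
    (hm : 2 ≤ m)
    (hE : ∀ x ∈ T, φ x ∈ outerDifferences (8 * m))
    (hE' : ∀ d ∈ outerDifferences (8 * m), ∃ x ∈ T, φ x = d) :
    IsMaxIndepSet (extPoints X (8 * m)) (extBlocks X B φ m) (extIndep T (8 * m)) := by
  obtain ⟨⟨hTX, hTB⟩, hmax⟩ := hT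
  refine ⟨⟨?_, ?_⟩, ?_⟩
  · exact Finset.union_subset_union (Finset.image_subset_image hTX)
      (Finset.image_subset_image (Finset.filter_subset _ _))
  · intro b hb hbT
    rcases mem_extBlocks.1 hb with ⟨c, hc, rfl⟩ | ⟨x, hx, y, hy, rfl⟩ | ⟨t, ht, rfl⟩
    · exact hTB c hc fun x hx => inl_mem_extIndep.1 (hbT (Finset.mem_image_of_mem _ hx))
    · have h1 := inl_mem_extIndep.1 (hbT (inl_mem_joinBlock.2 rfl))
      have h2 := inr_mem_extIndep.1 (hbT (inr_mem_joinBlock.2 (Or.inl rfl)))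
      have h3 := inr_mem_extIndep.1 (hbT (inr_mem_joinBlock.2 (Or.inr rfl)))
      have h4 := hE x h1
      simp only [outerDifferences, Finset.mem_filter] at h4
      have := xor_bit_two h2.2 h4.2.2
      omega
    · obtain ⟨y, hy, h4⟩ := cosetTriples_exists_ge ht
      have := inr_mem_extIndep.1 (hbT (Finset.mem_image_of_mem _ hy))
      omega
  · rintro S ⟨hSP, hSB⟩ hTS
    refine (Finset.Subset.antisymm hTS ?_).symm
    rintro (x | y) hS
    · -- The old points of `S` form an independent set of the old system containing `T`.
      rw [inl_mem_extIndep]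
      have hx : x ∈ X := by simpa [extPoints] using hSP hS
      rw [← hmax (X.filter fun a => Sum.inl a ∈ S) ⟨Finset.filter_subset _ _, ?_⟩ ?_]
      · exact Finset.mem_filter.2 ⟨hx, hS⟩
      · intro c hc hcS
        refine hSB _ (mem_extBlocks.2 (Or.inl ⟨c, hc, rfl⟩)) ?_
        exact Finset.image_subset_iff.2 fun a ha => (Finset.mem_filter.1 (hcS ha)).2
      · exact fun a ha => Finset.mem_filter.2 ⟨hTX ha, hTS (inl_mem_extIndep.2 ha)⟩
    · have hy : y < 8 * m := by simpa [extPoints] using hSP hS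
      rw [inr_mem_extIndep]
      by_contra hcon
      have h4 : 4 ≤ y % 8 := by omega
      obtain ⟨x, hx, hx12⟩ := hE' 12 (by
        simp only [outerDifferences, Finset.mem_filter, Finset.mem_range]; omega)
      refine hSB _ (mem_extBlocks.2 (Or.inr (Or.inl ⟨x, hTX hx, y, hy, rfl⟩))) ?_
      have hlt : y ^^^ 12 < 8 * m := by
        rw [← hn]
        exact Nat.xor_lt_two_pow (by omega) (by omega)
      have h1 := hTS (inl_mem_extIndep.2 hx)
      have h2 := hTS (inr_mem_extIndep.2 ⟨hlt, xor_bit_two' h4 (by norm_num)⟩)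
      simp [joinBlock, Finset.insert_subset_iff, hx12, h1, h2, hS]

end Extension

/-- Given an STS of order `v = 2^n - 7` (`n ≥ 4`) with a maximal independent set of
cardinality `(v-1)/2`, there exists an STS of order `v' = 2^(n+1) - 7` embedding it,
with a maximal independent set containing `T` and of cardinality `(v'-1)/2`. -/
theorem sts_doubling_plus_seven_maxIndep {α : Type*} [DecidableEq α] (n : ℕ) (hn : 4 ≤ n)
    (X : Finset α) (B : Finset (Finset α)) (T : Finset α)
    (hSTS : IsSTS X B) (hX : X.card = 2 ^ n - 7)
    (hT : IsMaxIndepSet X B T) (hTcard : T.card = (2 ^ n - 7 - 1) / 2) :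
    ∃ (X' : Finset (α ⊕ ℕ)) (B' : Finset (Finset (α ⊕ ℕ))) (T' : Finset (α ⊕ ℕ)),
      IsSTS X' B' ∧ X'.card = 2 ^ (n + 1) - 7 ∧
      X.image Sum.inl ⊆ X' ∧ B.image (Finset.image Sum.inl) ⊆ B' ∧
      IsMaxIndepSet X' B' T' ∧ T.image Sum.inl ⊆ T' ∧
      T'.card = (2 ^ (n + 1) - 7 - 1) / 2 := by
  obtain ⟨m, hm, hm2⟩ : ∃ m, 2 ^ n = 8 * m ∧ 2 ≤ m := by
    obtain ⟨k, rfl⟩ := Nat.exists_eq_add_of_le hn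
    refine ⟨2 * 2 ^ k, by ring, ?_⟩
    have := Nat.one_le_two_pow (n := k)
    omega
  rw [pow_succ, hm]
  rw [hm] at hX hTcard
  obtain ⟨φ, hD, hinj, hsurj, hE, hE'⟩ :=
    exists_bijOn_pair (D := differences (8 * m)) (E := outerDifferences (8 * m)) hT.1.1
      (by
        intro d
        simp only [differences, outerDifferences, Finset.mem_filter]
        exact fun h => ⟨h.1, Or.inr h.2.1⟩)
      (by rw [hX, card_differences m (by omega)])
      (by rw [hTcard, card_outerDifferences m (by omega)]; omega)
  have hdisj : ∀ (P : Finset α) (Q : Finset ℕ),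
      (P.image Sum.inl ∪ Q.image Sum.inr : Finset (α ⊕ ℕ)).card = P.card + Q.card := by
    intro P Q
    rw [Finset.card_union_of_disjoint, Finset.card_image_of_injective _ Sum.inl_injective,
      Finset.card_image_of_injective _ Sum.inr_injective]
    rw [Finset.disjoint_left]
    rintro (x | y) h1 h2
    · simp at h2
    · simp at h1
  refine ⟨extPoints X (8 * m), extBlocks X B φ m, extIndep T (8 * m),
    isSTS_ext hSTS hm hD hinj hsurj, ?_, Finset.subset_union_left,
    Finset.subset_union_left.trans Finset.subset_union_left,
    isMaxIndepSet_ext hT hm hm2 hE hE', Finset.subset_union_left, ?_⟩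
  · rw [extPoints, hdisj, Finset.card_range, hX]
    omega
  · rw [extIndep, hdisj, card_hyperplane, hTcard]
    omega
end

section
/- For every integer n ≥ 4, there exists a Steiner triple system Σ = (X, B) of order v = 2^n − 7 having a maximal independent set T with |T| = (v − 1)/2. -/
/-! ### Steiner triple systems from Steiner quasigroups -/

/-- The blocks `{x, y, f x y}` for distinct `x, y ∈ X`. -/
def opBlocks (X : Finset ℕ) (f : ℕ → ℕ → ℕ) : Finset (Finset ℕ) :=
  X.offDiag.image fun p => {p.1, p.2, f p.1 p.2}

lemma isSTS_of_op (X : Finset ℕ) (f : ℕ → ℕ → ℕ)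
    (hcl : ∀ x ∈ X, ∀ y ∈ X, x ≠ y → f x y ∈ X)
    (hne : ∀ x ∈ X, ∀ y ∈ X, x ≠ y → f x y ≠ x)
    (hcomm : ∀ x y, f x y = f y x)
    (hinv : ∀ x ∈ X, ∀ y ∈ X, x ≠ y → f x (f x y) = y) :
    IsSTS X (opBlocks X f) := by
  have hne' : ∀ x ∈ X, ∀ y ∈ X, x ≠ y → f x y ≠ y := fun x hx y hy h => by
    rw [hcomm]; exact hne y hy x hx h.symm
  constructor
  · intro b hb
    obtain ⟨⟨x, y⟩, hp, rfl⟩ := Finset.mem_image.1 hb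
    obtain ⟨hx, hy, hxy⟩ := Finset.mem_offDiag.1 hp
    dsimp only at *
    refine ⟨?_, Finset.card_eq_three.2 ⟨x, y, f x y, hxy, (hne x hx y hy hxy).symm,
      (hne' x hx y hy hxy).symm, rfl⟩⟩
    intro z hz
    simp only [Finset.mem_insert, Finset.mem_singleton] at hz
    rcases hz with rfl | rfl | rfl
    exacts [hx, hy, hcl _ hx _ hy hxy]
  · intro p hpX hp
    obtain ⟨x, y, hxy, rfl⟩ := Finset.card_eq_two.1 hp
    have hx : x ∈ X := hpX (by simp)
    have hy : y ∈ X := hpX (by simp)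
    refine ⟨{x, y, f x y}, ⟨Finset.mem_image.2 ⟨(x, y), by simp [hx, hy, hxy], rfl⟩, ?_⟩, ?_⟩
    · intro z; simp only [Finset.mem_insert, Finset.mem_singleton]; tauto
    · rintro b ⟨hb, hsub⟩
      obtain ⟨⟨a, c⟩, hq, rfl⟩ := Finset.mem_image.1 hb
      obtain ⟨ha, hc, hac⟩ := Finset.mem_offDiag.1 hq
      dsimp only at *
      have h1 := hinv a ha c hc hac
      have h2 := hinv c hc a ha hac.symm
      have h3 := hcomm a c
      have h4 := hcomm c (f a c)
      have h5 := hcomm a (f a c)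
      have hxm := hsub (show x ∈ ({x, y} : Finset ℕ) by simp)
      have hym := hsub (show y ∈ ({x, y} : Finset ℕ) by simp)
      simp only [Finset.mem_insert, Finset.mem_singleton] at hxm hym
      ext z
      simp only [Finset.mem_insert, Finset.mem_singleton]
      rcases hxm with rfl | rfl | rfl <;> rcases hym with rfl | rfl | rfl <;> grind

/-! ### The affine plane on a coset and the point at infinity -/

/-- The third point on the line through two points of `AG(2, 3)`, the point `(i, j)` being encoded
as `3 * i + j < 9`: the three points of a line have coordinatewise sum `0` modulo `3`. -/
def planeOp (a b : ℕ) : ℕ := 3 * ((6 - a / 3 - b / 3) % 3) + (6 - a % 3 - b % 3) % 3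

lemma planeOp_comm (a b : ℕ) : planeOp a b = planeOp b a := by
  unfold planeOp; omega

lemma planeOp_lt (a b : ℕ) : planeOp a b < 9 := by
  unfold planeOp; omega

lemma planeOp_ne : ∀ a < 9, ∀ b < 9, a ≠ b → planeOp a b ≠ a := by decide

lemma planeOp_inv : ∀ a < 9, ∀ b < 9, planeOp a (planeOp a b) = b := by decide

/-- The points `4, 5, 6, 7` form an arc. -/
lemma planeOp_arc : ∀ a < 8, ∀ b < 8, 4 ≤ a ∧ 4 ≤ b ∧ a ≠ b →
    planeOp a b < 4 ∨ planeOp a b = 8 := by decide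

/-- Position of a point within its copy of `AG(2, 3)`: the coordinate in `W`, with `8` for `∞`. -/
def planePos (x : ℕ) : ℕ := if x = 0 then 8 else x % 8

/-- The point at position `w` of the copy of `AG(2, 3)` on the coset `q`, together with `∞`. -/
def planePoint (q w : ℕ) : ℕ := if w = 8 then 0 else 8 * q + w

/-! ### The Steiner triple system of order `2 ^ n - 7` -/

/-- The Steiner quasigroup of the system: the operation of `AG(2, 3)` on a coset with `∞`, and
vector addition across different cosets. As `0 / 8 = 0`, the `max` below picks the coset of
whichever argument differs from `∞`. -/
def fanoOp (x y : ℕ) : ℕ :=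
  if x = 0 ∨ y = 0 ∨ x / 8 = y / 8 then
    planePoint (max (x / 8) (y / 8)) (planeOp (planePos x) (planePos y))
  else x ^^^ y

/-- The points: `∞` and the vectors outside `W`. -/
def fanoPoints (n : ℕ) : Finset ℕ := insert 0 (Finset.Ico 8 (2 ^ n))

lemma mem_fanoPoints {n x : ℕ} : x ∈ fanoPoints n ↔ x = 0 ∨ 8 ≤ x ∧ x < 2 ^ n := by
  simp [fanoPoints]

lemma fanoOp_comm (x y : ℕ) : fanoOp x y = fanoOp y x := by
  unfold fanoOp
  rw [planeOp_comm, max_comm, Nat.xor_comm]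
  congr 1
  apply propext
  constructor <;> (intro h; omega)

lemma planePos_lt (x : ℕ) : planePos x < 9 := by unfold planePos; split <;> omega

lemma xor_div_eight_s8 (x y : ℕ) : (x ^^^ y) / 8 = x / 8 ^^^ y / 8 := by
  simpa using Nat.xor_div_two_pow (a := x) (b := y) (n := 3)

lemma planePos_planePoint {q w : ℕ} (hq : q ≠ 0) (hw : w < 9) :
    planePos (planePoint q w) = w := by
  unfold planePos planePoint
  split_ifs <;> omega

/-- Two points of a common copy of `AG(2, 3)`, with the coset `q` of that copy; the
two points are distinct. -/
def SamePlane (q x y : ℕ) : Prop :=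
  0 < q ∧ (x = 0 ∨ x / 8 = q) ∧ (y = 0 ∨ y / 8 = q) ∧ x ≠ y

lemma SamePlane.fanoOp_eq {q x y : ℕ} (h : SamePlane q x y) :
    fanoOp x y = planePoint q (planeOp (planePos x) (planePos y)) := by
  obtain ⟨hq, hx, hy, hxy⟩ := h
  have hm : max (x / 8) (y / 8) = q := by omega
  unfold fanoOp
  rw [if_pos (by omega), hm]

lemma SamePlane.pos_ne {q x y : ℕ} (h : SamePlane q x y) : planePos x ≠ planePos y := by
  obtain ⟨hq, hx, hy, hxy⟩ := h
  unfold planePos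
  split_ifs <;> omega

lemma planePoint_planePos {q x : ℕ} (hx : x = 0 ∨ x / 8 = q) :
    planePoint q (planePos x) = x := by
  unfold planePos planePoint
  split_ifs <;> omega

lemma planePoint_mem_plane {q w : ℕ} (hw : w < 9) :
    planePoint q w = 0 ∨ planePoint q w / 8 = q := by
  unfold planePoint
  split_ifs <;> omega

lemma samePlane_or {n x y : ℕ} (hx : x ∈ fanoPoints n) (hy : y ∈ fanoPoints n) (hxy : x ≠ y) :
    (∃ q, SamePlane q x y ∧ 8 * q + 7 < 2 ^ n) ∨
      (8 ≤ x ∧ x < 2 ^ n ∧ 8 ≤ y ∧ y < 2 ^ n ∧ x / 8 ≠ y / 8) := by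
  rw [mem_fanoPoints] at hx hy
  by_cases h : x = 0 ∨ y = 0 ∨ x / 8 = y / 8
  · left
    have h8 : 8 ∣ 2 ^ n := by
      have h3 : 3 ≤ n := by
        by_contra h3
        have : 2 ^ n < 2 ^ 3 := Nat.pow_lt_pow_right (by norm_num) (by omega)
        omega
      exact pow_dvd_pow 2 h3
    exact ⟨max (x / 8) (y / 8), ⟨by omega, by omega, by omega, hxy⟩, by omega⟩
  · right; omega

lemma fanoOp_of_ne {x y : ℕ} (hx : 8 ≤ x) (hy : 8 ≤ y) (h : x / 8 ≠ y / 8) :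
    fanoOp x y = x ^^^ y := by
  unfold fanoOp
  rw [if_neg (by omega)]

lemma eight_le_xor {x y : ℕ} (h : x / 8 ≠ y / 8) : 8 ≤ x ^^^ y := by
  have h1 := xor_div_eight_s8 x y
  have h2 : x / 8 ^^^ y / 8 ≠ 0 := by simpa [Nat.xor_eq_zero_iff] using h
  omega

lemma fanoPoints_isSTS (n : ℕ) : IsSTS (fanoPoints n) (opBlocks (fanoPoints n) fanoOp) := by
  refine isSTS_of_op _ _ ?_ ?_ fanoOp_comm ?_
  · intro x hx y hy hxy
    rcases samePlane_or hx hy hxy with ⟨q, h, hn⟩ | ⟨hx, hx', hy, hy', h⟩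
    · rw [h.fanoOp_eq, mem_fanoPoints]
      have := planeOp_lt (planePos x) (planePos y)
      have := planePoint_mem_plane (q := q) this
      have := h.1
      omega
    · rw [fanoOp_of_ne hx hy h, mem_fanoPoints]
      exact Or.inr ⟨eight_le_xor h, Nat.xor_lt_two_pow hx' hy'⟩
  · intro x hx y hy hxy
    rcases samePlane_or hx hy hxy with ⟨q, h, hn⟩ | ⟨hx, hx', hy, hy', h⟩
    · rw [h.fanoOp_eq]
      intro he
      have h1 := planePos_planePoint h.1.ne' (planeOp_lt (planePos x) (planePos y))
      rw [he] at h1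
      exact planeOp_ne _ (planePos_lt x) _ (planePos_lt y) h.pos_ne h1.symm
    · rw [fanoOp_of_ne hx hy h]
      intro he
      have : y = 0 := by simpa using congrArg (x ^^^ ·) he
      omega
  · intro x hx y hy hxy
    rcases samePlane_or hx hy hxy with ⟨q, h, hn⟩ | ⟨hx, hx', hy, hy', h⟩
    · have hlt := planeOp_lt (planePos x) (planePos y)
      have hpos := planePos_planePoint h.1.ne' hlt
      rw [h.fanoOp_eq]
      have h' : SamePlane q x (planePoint q (planeOp (planePos x) (planePos y))) := by
        refine ⟨h.1, h.2.1, planePoint_mem_plane hlt, fun he => ?_⟩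
        rw [← he] at hpos
        exact planeOp_ne _ (planePos_lt x) _ (planePos_lt y) h.pos_ne hpos.symm
      rw [h'.fanoOp_eq, hpos, planeOp_inv _ (planePos_lt x) _ (planePos_lt y),
        planePoint_planePos h.2.2.1]
    · have hz := eight_le_xor h
      rw [fanoOp_of_ne hx hy h, fanoOp_of_ne hx hz]
      · simp
      · rw [xor_div_eight_s8]
        intro he
        have : 0 = y / 8 := by
          simpa only [Nat.xor_self, ← Nat.xor_assoc, Nat.zero_xor] using congrArg (x / 8 ^^^ ·) he
        omega

/-! ### The maximal independent set -/

/-- The vectors outside `W` whose bit of weight `4` is set. -/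
def fanoIndep (n : ℕ) : Finset ℕ := (Finset.Ico 8 (2 ^ n)).filter fun x => 4 ≤ x % 8

lemma mem_fanoIndep {n x : ℕ} : x ∈ fanoIndep n ↔ (8 ≤ x ∧ x < 2 ^ n) ∧ 4 ≤ x % 8 := by
  simp [fanoIndep]

lemma four_le_mod_iff_testBit (x : ℕ) : 4 ≤ x % 8 ↔ x.testBit 2 = true := by
  rw [Nat.testBit_eq_decide_div_mod_eq]
  simp only [decide_eq_true_eq]
  omega

lemma fanoIndep_card {n : ℕ} (hn : 4 ≤ n) : (fanoIndep n).card = (2 ^ n - 7 - 1) / 2 := by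
  obtain ⟨N, hN⟩ : 8 ∣ 2 ^ n := pow_dvd_pow 2 (show 3 ≤ n by omega)
  have h : fanoIndep n =
      (Finset.range (4 * (N - 1))).image fun k => 8 * (k / 4 + 1) + 4 + k % 4 := by
    ext x
    rw [mem_fanoIndep, hN, Finset.mem_image]
    simp only [Finset.mem_range]
    constructor
    · intro h
      exact ⟨4 * (x / 8 - 1) + x % 4, by omega, by omega⟩
    · rintro ⟨k, hk, rfl⟩
      omega
  rw [h, Finset.card_image_of_injective, Finset.card_range, hN]
  · omega
  · intro a b hab
    dsimp only at hab
    omega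

/-- No block lies in `fanoIndep n`. -/
lemma fanoOp_notMem {n x y : ℕ} (hx : x ∈ fanoIndep n) (hy : y ∈ fanoIndep n) (hxy : x ≠ y) :
    fanoOp x y ∉ fanoIndep n := by
  rw [mem_fanoIndep] at *
  by_cases h : x / 8 = y / 8
  · have hs : SamePlane (x / 8) x y := ⟨by omega, by omega, by omega, hxy⟩
    have hpx : planePos x = x % 8 := if_neg (by omega)
    have hpy : planePos y = y % 8 := if_neg (by omega)
    have := planeOp_arc (x % 8) (by omega) (y % 8) (by omega) (by omega)
    rw [hs.fanoOp_eq, hpx, hpy]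
    unfold planePoint
    split_ifs <;> omega
  · rw [fanoOp_of_ne hx.1.1 hy.1.1 h]
    rintro ⟨-, h4⟩
    rw [four_le_mod_iff_testBit] at *
    rw [Nat.testBit_xor, hx.2, hy.2] at h4
    simp at h4

/-- Every position off the arc `{4, 5, 6, 7}` lies on a secant of the arc. -/
lemma planeOp_secant : ∀ w < 9, w < 4 ∨ w = 8 →
    ∃ a < 8, ∃ b < 8, 4 ≤ a ∧ 4 ≤ b ∧ a ≠ b ∧ planeOp a b = w := by decide

/-- Every further point is the third point of a block through two points of `fanoIndep n`. -/
lemma exists_fanoOp_eq {n z : ℕ} (hn : 4 ≤ n) (hz : z ∈ fanoPoints n) (hzT : z ∉ fanoIndep n) :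
    ∃ x ∈ fanoIndep n, ∃ y ∈ fanoIndep n, x ≠ y ∧ fanoOp x y = z := by
  have h8 : 8 ∣ 2 ^ n := pow_dvd_pow 2 (show 3 ≤ n by omega)
  have h16 : 2 ^ 4 ≤ 2 ^ n := Nat.pow_le_pow_right (by norm_num) hn
  rw [mem_fanoPoints] at hz
  rw [mem_fanoIndep] at hzT
  -- `∞` lies in every copy of `AG(2, 3)`; the coset `1` serves for it.
  obtain ⟨q, hq, hqn, hzq⟩ : ∃ q, 0 < q ∧ 8 * q + 7 < 2 ^ n ∧ (z = 0 ∨ z / 8 = q) := by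
    rcases hz with hz | hz
    · exact ⟨1, by omega, by omega, Or.inl hz⟩
    · exact ⟨z / 8, by omega, by omega, Or.inr rfl⟩
  have hw : planePos z < 4 ∨ planePos z = 8 := by
    unfold planePos
    split_ifs <;> omega
  obtain ⟨a, ha, b, hb, ha4, hb4, hab, hw⟩ := planeOp_secant _ (planePos_lt z) hw
  refine ⟨8 * q + a, by rw [mem_fanoIndep]; omega, 8 * q + b, by rw [mem_fanoIndep]; omega,
    by omega, ?_⟩
  have hs : SamePlane q (8 * q + a) (8 * q + b) := ⟨hq, by omega, by omega, by omega⟩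
  have hpa : planePos (8 * q + a) = a := by unfold planePos; split_ifs <;> omega
  have hpb : planePos (8 * q + b) = b := by unfold planePos; split_ifs <;> omega
  rw [hs.fanoOp_eq, hpa, hpb, hw, planePoint_planePos hzq]

lemma fanoIndep_subset (n : ℕ) : fanoIndep n ⊆ fanoPoints n := by
  intro x hx
  rw [mem_fanoIndep] at hx
  exact mem_fanoPoints.2 (Or.inr hx.1)

lemma fanoIndep_isMaxIndepSet {n : ℕ} (hn : 4 ≤ n) :
    IsMaxIndepSet (fanoPoints n) (opBlocks (fanoPoints n) fanoOp) (fanoIndep n) := by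
  refine ⟨⟨fanoIndep_subset n, ?_⟩, ?_⟩
  · intro b hb hsub
    obtain ⟨⟨x, y⟩, hp, rfl⟩ := Finset.mem_image.1 hb
    obtain ⟨-, -, hxy⟩ := Finset.mem_offDiag.1 hp
    exact fanoOp_notMem (hsub (by simp)) (hsub (by simp)) hxy (hsub (by simp))
  · rintro T' ⟨hT'X, hT'⟩ hsub
    refine (Finset.Subset.antisymm hsub fun z hz => ?_).symm
    by_contra hzT
    obtain ⟨x, hx, y, hy, hxy, rfl⟩ := exists_fanoOp_eq hn (hT'X hz) hzT
    refine hT' {x, y, fanoOp x y} (Finset.mem_image.2 ⟨(x, y), ?_, rfl⟩) ?_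
    · exact Finset.mem_offDiag.2 ⟨fanoIndep_subset n hx, fanoIndep_subset n hy, hxy⟩
    · intro w hw
      simp only [Finset.mem_insert, Finset.mem_singleton] at hw
      rcases hw with rfl | rfl | rfl
      exacts [hsub hx, hsub hy, hz]

/-- For every `n ≥ 4` there exists an STS of order `v = 2^n - 7` with a maximal
independent set of cardinality `(v-1)/2`. -/
theorem exists_sts_with_max_indep (n : ℕ) (hn : 4 ≤ n) :
    ∃ (X : Finset ℕ) (B : Finset (Finset ℕ)) (T : Finset ℕ),
      IsSTS X B ∧ X.card = 2 ^ n - 7 ∧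
      IsMaxIndepSet X B T ∧ T.card = (2 ^ n - 7 - 1) / 2 := by
  refine ⟨fanoPoints n, opBlocks (fanoPoints n) fanoOp, fanoIndep n, fanoPoints_isSTS n, ?_,
    fanoIndep_isMaxIndepSet hn, fanoIndep_card hn⟩
  have h16 : 2 ^ 4 ≤ 2 ^ n := Nat.pow_le_pow_right (by norm_num) hn
  unfold fanoPoints
  rw [Finset.card_insert_of_notMem (by simp), Nat.card_Ico]
  omega
end

section
/- For every integer n ≥ 4, there exists a Steiner triple system Σ = (X, B) of order 2^n − 7 admitting a bicoloring with exactly n − 1 color classes, i.e., a partition of X into n − 1 nonempty classes such that every block of B meets exactly two of the classes. -/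
/-- A bicoloring of an STS `(X, B)` with exactly `k` colors: a partition of `X` into
`k` nonempty color classes such that every block of `B` meets exactly two classes. -/
def IsBicoloring {α : Type*} [DecidableEq α] (X : Finset α) (B : Finset (Finset α))
    (C : Finset (Finset α)) (k : ℕ) : Prop :=
  C.card = k ∧ (∀ c ∈ C, c.Nonempty) ∧ (∀ c ∈ C, c ⊆ X) ∧
    (∀ x ∈ X, ∃! c, c ∈ C ∧ x ∈ c) ∧
    ∀ b ∈ B, (C.filter fun c => (b ∩ c).Nonempty).card = 2

namespace StsBicolor

/-- The colours `a, b, c` take exactly two distinct values. -/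
def TwoVals (a b c : ℕ) : Prop := (a = b ∨ a = c ∨ b = c) ∧ ¬(a = b ∧ a = c)

/-- `m` is the third-point operation of a Steiner triple system on `X` (only its values on distinct
points matter), and `c` colours every block with exactly two colours. -/
def GoodMul {α : Type*} (X : Finset α) (m : α → α → α) (c : α → ℕ) : Prop :=
  ∀ x ∈ X, ∀ y ∈ X, x ≠ y →
    m x y ∈ X ∧ m x y ≠ x ∧ m x y = m y x ∧ m x (m x y) = y ∧ TwoVals (c x) (c y) (c (m x y))

lemma card_image_of_twoVals {c : ℕ → ℕ} {x y z : ℕ} (h : TwoVals (c x) (c y) (c z)) :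
    (({x, y, z} : Finset ℕ).image c).card = 2 := by
  obtain ⟨h1, h2⟩ := h
  rw [Finset.card_eq_two]
  simp only [Finset.image_insert, Finset.image_singleton]
  rcases h1 with h | h | h
  · exact ⟨c x, c z, fun e => h2 ⟨h, e⟩, by rw [← h]; simp⟩
  · exact ⟨c x, c y, fun e => h2 ⟨e, h⟩, by rw [← h]; ext; simp; tauto⟩
  · exact ⟨c x, c y, fun e => h2 ⟨e, e.trans h⟩, by rw [← h]; simp⟩

/-- A third-point operation yields the system whose blocks are the sets `{x, y, m x y}`, and the
fibres of `c` form a bicoloring of it. -/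
lemma exists_of_mul (X : Finset ℕ) (m : ℕ → ℕ → ℕ) (c : ℕ → ℕ) (h : GoodMul X m c) :
    ∃ (B C : Finset (Finset ℕ)), IsSTS X B ∧ IsBicoloring X B C (X.image c).card := by
  let F : ℕ → Finset ℕ := fun i => X.filter (fun x => c x = i)
  have hblock : ∀ b, b ∈ X.offDiag.image (fun p => ({p.1, p.2, m p.1 p.2} : Finset ℕ)) ↔
      ∃ x ∈ X, ∃ y ∈ X, x ≠ y ∧ b = {x, y, m x y} := by
    intro b
    simp only [Finset.mem_image, Finset.mem_offDiag, Prod.exists]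
    constructor
    · rintro ⟨x, y, ⟨hx, hy, hxy⟩, rfl⟩; exact ⟨x, hx, y, hy, hxy, rfl⟩
    · rintro ⟨x, hx, y, hy, hxy, rfl⟩; exact ⟨x, y, ⟨hx, hy, hxy⟩, rfl⟩
  have hsub : ∀ x ∈ X, ∀ y ∈ X, x ≠ y → ({x, y, m x y} : Finset ℕ) ⊆ X := by
    intro x hx y hy hxy z hz
    have := (h x hx y hy hxy).1
    simp only [Finset.mem_insert, Finset.mem_singleton] at hz
    rcases hz with rfl | rfl | rfl <;> assumption
  refine ⟨X.offDiag.image (fun p => {p.1, p.2, m p.1 p.2}), (X.image c).image F,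
    ⟨?_, ?_⟩, ?_, ?_, ?_, ?_, ?_⟩
  · intro b hb
    obtain ⟨x, hx, y, hy, hxy, rfl⟩ := (hblock b).1 hb
    refine ⟨hsub x hx y hy hxy, ?_⟩
    obtain ⟨-, h1, h2, -⟩ := h x hx y hy hxy
    obtain ⟨-, h3, -⟩ := h y hy x hx hxy.symm
    rw [Finset.card_eq_three]
    exact ⟨x, y, m x y, hxy, h1.symm, fun e => h3 (by rw [← h2, ← e]), rfl⟩
  · intro p hp hp2
    obtain ⟨x, y, hxy, rfl⟩ := Finset.card_eq_two.1 hp2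
    have hx : x ∈ X := hp (by simp)
    have hy : y ∈ X := hp (by simp)
    refine ⟨{x, y, m x y}, ⟨(hblock _).2 ⟨x, hx, y, hy, hxy, rfl⟩, ?_⟩, ?_⟩
    · intro z hz
      simp only [Finset.mem_insert, Finset.mem_singleton] at hz ⊢
      tauto
    · rintro b ⟨hb, hs⟩
      obtain ⟨u, hu, v, hv, huv, rfl⟩ := (hblock b).1 hb
      have hxm : x ∈ ({u, v, m u v} : Finset ℕ) := hs (by simp)
      have hym : y ∈ ({u, v, m u v} : Finset ℕ) := hs (by simp)
      obtain ⟨-, -, h2, h3, -⟩ := h u hu v hv huv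
      obtain ⟨-, -, -, h4, -⟩ := h v hv u hu huv.symm
      obtain ⟨hmX, h5, -⟩ := h u hu v hv huv
      obtain ⟨-, h6, -⟩ := h v hv u hu huv.symm
      obtain ⟨-, -, h7, -⟩ := h u hu _ hmX h5.symm
      obtain ⟨-, -, h8, -⟩ := h v hv _ hmX (fun e => h6 (by rw [← h2, ← e]))
      simp only [Finset.mem_insert, Finset.mem_singleton] at hxm hym
      rw [← h2] at h4
      -- the product of two of `u`, `v`, `m u v` is the third one
      rcases hxm with rfl | rfl | rfl <;> rcases hym with rfl | rfl | rfl <;>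
        first
        | exact absurd rfl hxy
        | (ext z; grind)
  · rw [Finset.card_image_of_injOn]
    intro i hi j hj hij
    simp only [Finset.coe_image, Set.mem_image, Finset.mem_coe] at hi
    obtain ⟨x, hx, rfl⟩ := hi
    have : x ∈ F (c x) := by simp [F, hx]
    rw [hij] at this
    exact (Finset.mem_filter.1 this).2
  · intro s hs
    simp only [Finset.mem_image] at hs
    obtain ⟨_, ⟨x, hx, rfl⟩, rfl⟩ := hs
    exact ⟨x, by simp [F, hx]⟩
  · intro s hs
    simp only [Finset.mem_image] at hs
    obtain ⟨_, ⟨x, hx, rfl⟩, rfl⟩ := hs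
    exact Finset.filter_subset _ _
  · intro x hx
    refine ⟨F (c x), ⟨Finset.mem_image_of_mem _ (Finset.mem_image_of_mem _ hx), by simp [F, hx]⟩, ?_⟩
    rintro s ⟨hs, hxs⟩
    simp only [Finset.mem_image] at hs
    obtain ⟨_, ⟨y, hy, rfl⟩, rfl⟩ := hs
    rw [(Finset.mem_filter.1 hxs).2]
  · intro b hb
    obtain ⟨x, hx, y, hy, hxy, rfl⟩ := (hblock b).1 hb
    have hs := hsub x hx y hy hxy
    have h2 := card_image_of_twoVals (h x hx y hy hxy).2.2.2.2
    generalize ({x, y, m x y} : Finset ℕ) = b at hs h2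
    -- the classes meeting `b` are the fibres over the colours of `b`
    have key : ((X.image c).image F).filter (fun s => (b ∩ s).Nonempty) = (b.image c).image F := by
      ext s
      simp only [Finset.mem_filter, Finset.mem_image]
      constructor
      · rintro ⟨⟨_, ⟨z, hz, rfl⟩, rfl⟩, w, hw⟩
        rw [Finset.mem_inter] at hw
        exact ⟨c w, ⟨w, hw.1, rfl⟩, by rw [(Finset.mem_filter.1 hw.2).2]⟩
      · rintro ⟨_, ⟨z, hz, rfl⟩, rfl⟩
        exact ⟨⟨c z, ⟨z, hs hz, rfl⟩, rfl⟩, z, by simp [F, hz, hs hz]⟩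
    rw [key, Finset.card_image_of_injOn, h2]
    intro i hi j hj hij
    simp only [Finset.coe_image, Set.mem_image, Finset.mem_coe] at hi
    obtain ⟨x, hx, rfl⟩ := hi
    have : x ∈ F (c x) := by simp [F, hs hx]
    rw [hij] at this
    exact (Finset.mem_filter.1 this).2

/-- `exists_of_mul` for an operation on any countably infinite type of points. -/
lemma exists_of_mul_equiv {α : Type*} [DecidableEq α] (e : α ≃ ℕ) (X : Finset α) (m : α → α → α)
    (c : α → ℕ) (h : GoodMul X m c) :
    ∃ (Y : Finset ℕ) (B C : Finset (Finset ℕ)),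
      IsSTS Y B ∧ Y.card = X.card ∧ IsBicoloring Y B C (X.image c).card := by
  obtain ⟨B, C, h1, h2⟩ := exists_of_mul (X.map e.toEmbedding)
    (fun x y => e (m (e.symm x) (e.symm y))) (fun x => c (e.symm x)) (by
      intro x hx y hy hxy
      obtain ⟨x, rfl⟩ := e.surjective x
      obtain ⟨y, rfl⟩ := e.surjective y
      have := h x (by simpa using hx) y (by simpa using hy) (fun e => hxy (by rw [e]))
      simpa using this)
  refine ⟨X.map e.toEmbedding, B, C, h1, by simp, ?_⟩
  have : (X.map e.toEmbedding).image (fun x => c (e.symm x)) = X.image c := by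
    rw [Finset.map_eq_image, Finset.image_image]
    congr 1
    ext x
    simp
  rwa [this] at h2

/-- The group `ℤ/4 × ℤ/2`; the second component separates the colour common to all fibres (`true`)
from the colour that depends on the fibre (`false`). -/
abbrev R := Fin 4 × Bool

/-- The third-point operation of a Steiner triple system on nine points `R ∪ {∞}`, on pairs of
points of `R` (with `none` for `∞`).  Writing `aᵢ = (i, false)` and `bᵢ = (i, true)`, its blocks are
`∞ aᵢ aᵢ₊₂`, `∞ bᵢ bᵢ₊₂`, `aᵢ aᵢ₊₁ bᵢ₊₁` and `aᵢ bᵢ₊₂ bᵢ₊₃`. -/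
def loc : R → R → Option R
  | (i, false), (j, false) =>
    if j = i + 1 then some (j, true) else if i = j + 1 then some (i, true) else none
  | (i, true), (j, true) =>
    if j = i + 1 then some (i + 2, false) else if i = j + 1 then some (j + 2, false) else none
  | (i, false), (j, true) => mixed i j
  | (j, true), (i, false) => mixed i j
where
  /-- The third point on the block through `aᵢ` and `bⱼ`. -/
  mixed (i j : Fin 4) : Option R :=
    if j = i then some (i + 3, false) else if j = i + 1 then some (i + 1, false)
    else if j = i + 2 then some (i + 3, true) else some (i + 2, true)

/-- The third point on the block through `∞` and a point of `R`. -/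
def opp (a : R) : R := (a.1 + 2, a.2)

/-- The totally symmetric operation `-a - b` on `ℤ/4 × ℤ/2`. -/
def comp (a b : R) : R := (-a.1 - b.1, xor a.2 b.2)

lemma loc_comm : ∀ a b : R, loc a b = loc b a := by decide

lemma loc_none : ∀ a b : R, a ≠ b → loc a b = none → opp a = b := by decide

lemma loc_some : ∀ a b : R, a ≠ b → ∀ d, loc a b = some d → d ≠ a ∧ loc a d = some b := by decide

lemma loc_opp : ∀ a : R, opp a ≠ a ∧ opp (opp a) = a ∧ loc a (opp a) = none := by decide

lemma loc_color : ∀ a b : R, a ≠ b → ∀ d, loc a b = some d →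
    (a.2 = b.2 ∨ a.2 = d.2 ∨ b.2 = d.2) ∧ ¬(a.2 = b.2 ∧ a.2 = d.2) := by decide

lemma comp_comm : ∀ a b : R, comp a b = comp b a := by decide

lemma comp_comp : ∀ a b : R, comp a (comp a b) = b := by decide

/-- The points: `none` is `∞`, and `some (q, a)` is the point `a` of the fibre `q`. -/
abbrev Pt := Option (ℕ × R)

/-- The third-point operation of the whole system. -/
def mul : Pt → Pt → Pt
  | none, none => none
  | none, some (q, a) => some (q, opp a)
  | some (q, a), none => some (q, opp a)
  | some (q, a), some (p, b) =>
    if q = p then (loc a b).map (fun d => (q, d)) else some (q ^^^ p, comp a b)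

/-- The colour of a point, where `w` is the colour shared by the points `(q, (i, true))`.  The
colour of `∞` is `0`, which is not the binary length of any `q ≥ 1`. -/
def col (w : ℕ) : Pt → ℕ
  | none => 0
  | some (q, a) => if a.2 then w else Nat.size q

/-- The point set with fibres indexed by `1 ≤ q < 2 ^ k`. -/
def pts (k : ℕ) : Finset Pt := Finset.insertNone (Finset.Ico 1 (2 ^ k) ×ˢ Finset.univ)

/-- The binary length of a `xor` of numbers of different lengths is the larger one. -/
lemma size_xor_of_lt {q p : ℕ} (h : Nat.size q < Nat.size p) :
    Nat.size (q ^^^ p) = Nat.size p := by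
  have hq : q < 2 ^ Nat.size p := lt_of_lt_of_le (Nat.lt_size_self q)
    (Nat.pow_le_pow_right (by norm_num) h.le)
  apply le_antisymm
  · exact Nat.size_le.2 (Nat.xor_lt_two_pow hq (Nat.lt_size_self p))
  · by_contra! hlt
    obtain ⟨k, hk⟩ : ∃ k, Nat.size p = k + 1 := ⟨Nat.size p - 1, by omega⟩
    have h1 : q ^^^ p < 2 ^ k := Nat.size_le.1 (by omega)
    have h2 : q < 2 ^ k := Nat.size_le.1 (by omega)
    -- `p = q xor (q xor p)` would be too short
    have h3 := Nat.xor_lt_two_pow h2 h1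
    rw [Nat.xor_xor_cancel_left] at h3
    have := Nat.size_le.2 h3
    omega

/-- The binary lengths of `q`, `p` and `q xor p` take exactly two values if `q ≠ 0`. -/
lemma size_xor {q p : ℕ} (hq : q ≠ 0) :
    TwoVals (Nat.size q) (Nat.size p) (Nat.size (q ^^^ p)) := by
  rcases lt_trichotomy (Nat.size q) (Nat.size p) with h | h | h
  · have := size_xor_of_lt h
    unfold TwoVals; omega
  · refine ⟨Or.inl h, fun h' => ?_⟩
    have hpos : 0 < Nat.size q := Nat.size_pos.2 (Nat.pos_of_ne_zero hq)
    obtain ⟨k, hk⟩ : ∃ k, Nat.size q = k + 1 := ⟨Nat.size q - 1, by omega⟩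
    have top : ∀ x, Nat.size x = k + 1 → Nat.testBit x k = true := by
      intro x hx
      have h1 : x < 2 ^ (k + 1) := Nat.size_le.1 hx.le
      have h2 : 2 ^ k ≤ x := Nat.lt_size.1 (by omega)
      rw [Nat.testBit_eq_decide_div_mod_eq]
      have : x / 2 ^ k = 1 := by
        rw [Nat.div_eq_iff (by positivity)]
        rw [pow_succ] at h1
        omega
      simp [this]
    have h1 := top q hk
    have h2 := top p (by omega)
    have h3 := top (q ^^^ p) (by omega)
    simp [Nat.testBit_xor, h1, h2] at h3
  · have := size_xor_of_lt h
    rw [Nat.xor_comm] at this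
    unfold TwoVals; omega

lemma goodMul (k : ℕ) : GoodMul (pts k) mul (col (k + 1)) := by
  have hsz : ∀ q, 1 ≤ q → q < 2 ^ k → 0 < Nat.size q ∧ Nat.size q < k + 1 := fun q h1 h2 =>
    ⟨Nat.size_pos.2 h1, Nat.lt_succ_of_le (Nat.size_le.2 h2)⟩
  rintro (_ | ⟨q, a⟩) hx (_ | ⟨p, b⟩) hy hxy
  · exact absurd rfl hxy
  · simp only [pts, Finset.some_mem_insertNone, Finset.mem_product, Finset.mem_Ico,
      Finset.mem_univ, and_true] at hy
    have := hsz p hy.1 hy.2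
    refine ⟨by simpa [pts, mul] using hy, by simp [mul], rfl, ?_, ?_⟩
    · simp [mul, (loc_opp b).2.1]
    · simp only [mul, col, opp, TwoVals]
      cases b.2 <;> simp <;> omega
  · simp only [pts, Finset.some_mem_insertNone, Finset.mem_product, Finset.mem_Ico,
      Finset.mem_univ, and_true] at hx
    have := hsz q hx.1 hx.2
    obtain ⟨h1, h2, h3⟩ := loc_opp a
    refine ⟨by simpa [pts, mul] using hx, by simpa [mul] using h1, rfl, ?_, ?_⟩
    · simp [mul, h3]
    · simp only [mul, col, opp, TwoVals]
      cases a.2 <;> simp <;> omega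
  · simp only [pts, Finset.some_mem_insertNone, Finset.mem_product, Finset.mem_Ico,
      Finset.mem_univ, and_true] at hx hy
    have hq := hsz q hx.1 hx.2
    have hp := hsz p hy.1 hy.2
    by_cases hqp : q = p
    · subst hqp
      have hab : a ≠ b := fun e => hxy (by rw [e])
      cases hl : loc a b with
      | none =>
        have hl' : loc b a = none := by rw [loc_comm, hl]
        have ho := loc_none a b hab hl
        have ho2 : a.2 = b.2 := by rw [← ho]; rfl
        refine ⟨by simp [mul, hl, pts], by simp [mul, hl], by simp [mul, hl, hl'], ?_, ?_⟩
        · simp [mul, hl, ho]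
        · simp only [mul, hl, col, TwoVals, ho2, if_true, Option.map_none]
          cases b.2 <;> simp <;> omega
      | some d =>
        have hl' : loc b a = some d := by rw [loc_comm, hl]
        obtain ⟨h1, h2⟩ := loc_some a b hab d hl
        refine ⟨by simpa [mul, hl, pts] using hx, by simpa [mul, hl] using h1,
          by simp [mul, hl, hl'], by simp [mul, hl, h2], ?_⟩
        have hc := loc_color a b hab d hl
        simp only [mul, hl, col, TwoVals, if_true, Option.map_some]
        revert hc
        cases a.2 <;> cases b.2 <;> cases d.2 <;> simp <;> omega
    · have hne : q ^^^ p ≠ 0 := fun e => hqp (Nat.xor_eq_zero_iff.1 e)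
      have hlt := Nat.xor_lt_two_pow hx.2 hy.2
      have hne' : q ≠ q ^^^ p := fun e => by
        have : q ^^^ q = q ^^^ (q ^^^ p) := congrArg _ e
        rw [Nat.xor_self, Nat.xor_xor_cancel_left] at this
        omega
      have hr := hsz _ (Nat.pos_of_ne_zero hne) hlt
      have hs := size_xor (q := q) (p := p) (by omega)
      refine ⟨?_, ?_, ?_, ?_, ?_⟩
      · simp [mul, hqp, pts, hlt]; omega
      · simp only [mul, hqp, if_false, ne_eq, Option.some.injEq, Prod.mk.injEq]
        exact fun e => hne' e.1.symm
      · simp [mul, hqp, Ne.symm hqp, Nat.xor_comm, comp_comm]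
      · simp [mul, hqp, hne', comp_comp]
      · simp only [mul, hqp, if_false, col, comp]
        revert hs
        unfold TwoVals
        cases a.2 <;> cases b.2 <;> simp <;> omega

lemma card_pts (k : ℕ) : (pts k).card = 2 ^ (k + 3) - 7 := by
  have : 0 < 2 ^ k := by positivity
  simp [pts, pow_add]
  omega

/-- All colours `0, …, k + 1` occur. -/
lemma image_col (k : ℕ) (hk : 1 ≤ k) : (pts k).image (col (k + 1)) = Finset.range (k + 2) := by
  ext i
  simp only [Finset.mem_image, Finset.mem_range]
  constructor
  · rintro ⟨_ | ⟨q, a⟩, hx, rfl⟩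
    · simp [col]
    · simp only [pts, Finset.some_mem_insertNone, Finset.mem_product, Finset.mem_Ico,
        Finset.mem_univ, and_true] at hx
      have := Nat.size_le.2 hx.2
      simp only [col]
      split_ifs <;> omega
  · intro hi
    rcases Nat.eq_zero_or_pos i with rfl | hpos
    · exact ⟨none, by simp [pts], rfl⟩
    · rcases Nat.lt_or_ge i (k + 1) with h | h
      · refine ⟨some (2 ^ (i - 1), (0, false)), ?_, ?_⟩
        · have : 2 ^ (i - 1) < 2 ^ k := Nat.pow_lt_pow_right (by norm_num) (by omega)
          simpa [pts, Nat.one_le_two_pow] using this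
        · simp only [col, Nat.size_pow]
          simp; omega
      · refine ⟨some (1, (0, true)), ?_, ?_⟩
        · have : 1 < 2 ^ k := Nat.one_lt_two_pow (by omega)
          simpa [pts] using this
        · simp [col]; omega

end StsBicolor

/-- For every `n ≥ 4` there exists an STS of order `2^n - 7` admitting a bicoloring
with exactly `n - 1` color classes. -/
theorem exists_sts_bicolorable (n : ℕ) (hn : 4 ≤ n) :
    ∃ (X : Finset ℕ) (B : Finset (Finset ℕ)) (C : Finset (Finset ℕ)),
      IsSTS X B ∧ X.card = 2 ^ n - 7 ∧ IsBicoloring X B C (n - 1) := by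
  obtain ⟨k, rfl⟩ : ∃ k, n = k + 3 := ⟨n - 3, by omega⟩
  have e : StsBicolor.Pt ≃ ℕ := Classical.choice (nonempty_equiv_of_countable)
  have h := StsBicolor.exists_of_mul_equiv e _ _ _ (StsBicolor.goodMul k)
  rw [StsBicolor.card_pts, StsBicolor.image_col k (by omega), Finset.card_range] at h
  exact h
end

section
/- There exists a Steiner triple system Σ = (X, B) of order 9 that has a maximal independent set T of cardinality 4 and admits a bicoloring with exactly 3 color classes, one of which equals T. -/
/-- The twelve lines of the affine plane of order 3, the point `(i, j)` being `3 * i + j`. -/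
def affineLines : Finset (Finset ℕ) :=
  {{0, 1, 2}, {3, 4, 5}, {6, 7, 8},
   {0, 3, 6}, {1, 4, 7}, {2, 5, 8},
   {0, 4, 8}, {1, 5, 6}, {2, 3, 7},
   {0, 5, 7}, {1, 3, 8}, {2, 4, 6}}

/-- The classes of the bicoloring: edge midpoints, corners, and center of the 3 × 3 array. -/
def affineColors : Finset (Finset ℕ) :=
  {{1, 3, 5, 7}, {0, 2, 6, 8}, {4}}

set_option maxRecDepth 100000 in
lemma affineLines_join : ∀ x ∈ Finset.range 9, ∀ y ∈ Finset.range 9, x ≠ y →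
    ∃ b ∈ affineLines, (x ∈ b ∧ y ∈ b) ∧ ∀ b' ∈ affineLines, x ∈ b' ∧ y ∈ b' → b' = b := by
  decide

lemma affineLines_isSTS : IsSTS (Finset.range 9) affineLines := by
  refine ⟨by decide, fun p hp hcard => ?_⟩
  obtain ⟨x, y, hxy, rfl⟩ := Finset.card_eq_two.mp hcard
  obtain ⟨b, hb, hxyb, huniq⟩ := affineLines_join x (hp (by simp)) y (hp (by simp)) hxy
  refine ⟨b, ⟨hb, ?_⟩, fun b' hb' => huniq b' hb'.1 ?_⟩
  · simpa [Finset.insert_subset_iff] using hxyb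
  · simpa [Finset.insert_subset_iff] using hb'.2

set_option maxRecDepth 100000 in
/-- Each point outside `{1, 3, 5, 7}` completes a line with two points of that set. -/
lemma affineLines_complete : ∀ x ∈ Finset.range 9, x ∉ ({1, 3, 5, 7} : Finset ℕ) →
    ∃ b ∈ affineLines, b ⊆ insert x {1, 3, 5, 7} := by
  decide

lemma midpoints_isMaxIndepSet : IsMaxIndepSet (Finset.range 9) affineLines {1, 3, 5, 7} := by
  refine ⟨⟨by decide, by decide⟩, fun T' hT' hsub => ?_⟩
  refine Finset.Subset.antisymm (fun x hx => ?_) hsub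
  by_contra hxT
  obtain ⟨b, hb, hbx⟩ := affineLines_complete x (hT'.1 hx) hxT
  exact hT'.2 b hb (hbx.trans (Finset.insert_subset hx hsub))

set_option maxRecDepth 100000 in
lemma affineColors_partition : ∀ x ∈ Finset.range 9,
    ∃ c ∈ affineColors, x ∈ c ∧ ∀ c' ∈ affineColors, x ∈ c' → c' = c := by
  decide

set_option maxRecDepth 100000 in
lemma affineColors_isBicoloring : IsBicoloring (Finset.range 9) affineLines affineColors 3 := by
  refine ⟨by decide, by decide, by decide, fun x hx => ?_, by decide⟩
  obtain ⟨c, hc, hxc, huniq⟩ := affineColors_partition x hx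
  exact ⟨c, ⟨hc, hxc⟩, fun c' hc' => huniq c' hc'.1 hc'.2⟩

/-- There is an STS of order 9 with a maximal independent set `T` of cardinality 4
and a 3-bicoloring one of whose color classes is `T`. -/
theorem exists_sts_nine_with_max_indep_and_bicoloring :
    ∃ (X : Finset ℕ) (B : Finset (Finset ℕ)) (T : Finset ℕ) (C : Finset (Finset ℕ)),
      IsSTS X B ∧ X.card = 9 ∧
      IsMaxIndepSet X B T ∧ T.card = 4 ∧
      IsBicoloring X B C 3 ∧ T ∈ C := by
  exact ⟨Finset.range 9, affineLines, {1, 3, 5, 7}, affineColors, affineLines_isSTS, by decide,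
    midpoints_isMaxIndepSet, by decide, affineColors_isBicoloring, by decide⟩
end
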